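/- arXiv:2211.09094 — 2 statements merged into one kernel-verified Lean document; each statement's English description precedes it below -/
import Mathlib

section
/- Let c, ε > 0 be fixed. For every δ > 0 there exists N such that for all integers m, n ≥ N satisfying (ln n)^{3+ε} ≤ c·m, one has |S_{n,m} − m − (π/√2)·√(m·ln n)| ≤ δ·√(m·ln n). In other words, S_{n,m} = m + (π/√2)√(m ln n) + o(√(m ln n)) as m, n → ∞ with (ln n)^{3+ε} ≤ c·m. -/
open Finset

/-- The maximum entry of a tuple `j : Fin n → Fin (m+1)`, as a natural number. -/
def maxEntry {n m : ℕ} (j : Fin n → Fin (m + 1)) : ℕ :=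
  Finset.univ.sup (fun i => (j i : ℕ))

/-- Expected value of `max_i X_i(t)` where `(X_1(t),…,X_n(t))` follows the multivariate
hypergeometric distribution of the counts of each of `n` types (each with multiplicity `m`)
among the bottom `t` cards of a uniformly shuffled deck of `n*m` cards. -/
noncomputable def expMaxHyper (n m t : ℕ) : ℝ :=
  ∑ j ∈ univ.filter (fun j : Fin n → Fin (m + 1) => ∑ i, (j i : ℕ) = t),
    ((∏ i, (Nat.choose m (j i : ℕ) : ℝ)) / (Nat.choose (n * m) t : ℝ)) * (maxEntry j : ℝ)

/-- `S n m`: expected number of correct guesses under the optimal strategy in the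
complete-feedback card guessing game with `n` types each appearing `m` times. -/
noncomputable def S (n m : ℕ) : ℝ :=
  ∑ t ∈ Finset.Icc 1 (n * m), expMaxHyper n m t / t

open Filter Topology

section BinomialTuples

variable {n m : ℕ}

/-- The probability that a binomial variable with parameters `m` and `p` equals `k`. -/
noncomputable def binomWeight (m : ℕ) (p : ℝ) (k : ℕ) : ℝ :=
  (m.choose k : ℝ) * p ^ k * (1 - p) ^ (m - k)

lemma binomWeight_eq_eval (m : ℕ) (p : ℝ) (k : ℕ) :
    binomWeight m p k = (bernsteinPolynomial ℝ m k).eval p := by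
  simp [binomWeight, bernsteinPolynomial]

lemma binomWeight_nonneg {p : ℝ} (hp : 0 ≤ p) (hp' : p ≤ 1) (k : ℕ) :
    0 ≤ binomWeight m p k := by
  have : 0 ≤ 1 - p := by linarith
  unfold binomWeight
  positivity

lemma sum_binomWeight (m : ℕ) (p : ℝ) : ∑ k : Fin (m + 1), binomWeight m p k = 1 := by
  rw [Fin.sum_univ_eq_sum_range (binomWeight m p)]
  simpa [Polynomial.eval_finsetSum, binomWeight_eq_eval] using
    congrArg (Polynomial.eval p) (bernsteinPolynomial.sum ℝ m)

lemma sum_binomWeight_mul_id (m : ℕ) (p : ℝ) :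
    ∑ k : Fin (m + 1), binomWeight m p k * (k : ℕ) = m * p := by
  rw [Fin.sum_univ_eq_sum_range (fun k => binomWeight m p k * k)]
  simpa [Polynomial.eval_finsetSum, binomWeight_eq_eval, mul_comm] using
    congrArg (Polynomial.eval p) (bernsteinPolynomial.sum_smul ℝ m)

lemma sum_binomWeight_mul_sq (m : ℕ) (p : ℝ) :
    ∑ k : Fin (m + 1), binomWeight m p k * ((k : ℕ) - m * p) ^ 2 = m * p * (1 - p) := by
  rw [Fin.sum_univ_eq_sum_range (fun k => binomWeight m p k * ((k : ℝ) - m * p) ^ 2)]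
  have h := congrArg (Polynomial.eval p) (bernsteinPolynomial.variance ℝ m)
  simp only [Polynomial.eval_finsetSum, nsmul_eq_mul, Polynomial.eval_mul, Polynomial.eval_pow,
    Polynomial.eval_sub, Polynomial.eval_natCast, Polynomial.eval_X, Polynomial.eval_one,
    ← binomWeight_eq_eval] at h
  rw [← h]
  exact Finset.sum_congr rfl fun k _ => by ring

lemma sum_binomWeight_mul_exp (m : ℕ) (p l : ℝ) :
    ∑ k : Fin (m + 1), binomWeight m p k * Real.exp (l * (k : ℕ)) =
      (p * Real.exp l + (1 - p)) ^ m := by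
  rw [Fin.sum_univ_eq_sum_range (fun k => binomWeight m p k * Real.exp (l * k)), add_pow]
  refine Finset.sum_congr rfl fun k _ => ?_
  rw [binomWeight, mul_comm l, Real.exp_nat_mul, mul_pow]
  ring

/-- The probability that `n` independent binomial variables take the values `j`. -/
noncomputable def tupleWeight (p : ℝ) (j : Fin n → Fin (m + 1)) : ℝ :=
  ∏ i, binomWeight m p (j i)

lemma tupleWeight_nonneg {p : ℝ} (hp : 0 ≤ p) (hp' : p ≤ 1) (j : Fin n → Fin (m + 1)) :
    0 ≤ tupleWeight p j :=
  Finset.prod_nonneg fun _ _ => binomWeight_nonneg hp hp' _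

lemma sum_prod_eq (g : Fin n → Fin (m + 1) → ℝ) :
    ∑ j : Fin n → Fin (m + 1), ∏ i, g i (j i) = ∏ i, ∑ k, g i k := by
  rw [Finset.prod_univ_sum, Fintype.piFinset_univ]

lemma sum_tupleWeight (p : ℝ) : ∑ j : Fin n → Fin (m + 1), tupleWeight p j = 1 := by
  simp [tupleWeight, sum_prod_eq fun _ k => binomWeight m p k, sum_binomWeight]

lemma sum_tupleWeight_mul_apply (p : ℝ) (i : Fin n) (f : Fin (m + 1) → ℝ) :
    ∑ j : Fin n → Fin (m + 1), tupleWeight p j * f (j i) =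
      ∑ k : Fin (m + 1), binomWeight m p k * f k := by
  have h := sum_prod_eq (n := n) (fun i' k => binomWeight m p k * if i' = i then f k else 1)
  have h1 : ∀ i', (∑ k : Fin (m + 1), binomWeight m p k * if i' = i then f k else 1) =
      if i' = i then ∑ k : Fin (m + 1), binomWeight m p k * f k else 1 := by
    intro i'
    split_ifs <;> simp [sum_binomWeight]
  simp only [h1, Finset.prod_mul_distrib] at h
  simpa [tupleWeight] using h

lemma sum_tupleWeight_lt (p : ℝ) (y : ℝ) :
    ∑ j : Fin n → Fin (m + 1), tupleWeight p j * (if ∀ i, ((j i : ℕ) : ℝ) < y then 1 else 0) =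
      (∑ k : Fin (m + 1), binomWeight m p k * if ((k : ℕ) : ℝ) < y then 1 else 0) ^ n := by
  have h := sum_prod_eq (n := n)
    (fun _ (k : Fin (m + 1)) => binomWeight m p k * if ((k : ℕ) : ℝ) < y then 1 else 0)
  rw [Finset.prod_const, Finset.card_univ, Fintype.card_fin] at h
  rw [← h]
  refine Finset.sum_congr rfl fun j _ => ?_
  rw [Finset.prod_mul_distrib, tupleWeight]
  congr 1
  simp [Finset.prod_ite_zero]

lemma le_maxEntry (j : Fin n → Fin (m + 1)) (i : Fin n) : (j i : ℕ) ≤ maxEntry j :=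
  Finset.le_sup (f := fun i => (j i : ℕ)) (Finset.mem_univ i)

lemma maxEntry_le_sum (j : Fin n → Fin (m + 1)) : maxEntry j ≤ ∑ i, (j i : ℕ) :=
  Finset.sup_le fun i _ =>
    Finset.single_le_sum (f := fun i => (j i : ℕ)) (fun _ _ => Nat.zero_le _) (Finset.mem_univ i)

lemma exists_eq_maxEntry (hn : 0 < n) (j : Fin n → Fin (m + 1)) :
    ∃ i, maxEntry j = (j i : ℕ) := by
  have : Nonempty (Fin n) := ⟨⟨0, hn⟩⟩
  obtain ⟨i, -, hi⟩ :=
    Finset.exists_mem_eq_sup Finset.univ Finset.univ_nonempty (fun i => (j i : ℕ))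
  exact ⟨i, hi⟩

/-- The expected maximum of `n` independent binomial variables with parameters `m` and `p`. -/
noncomputable def expMaxBinom (n m : ℕ) (p : ℝ) : ℝ :=
  ∑ j : Fin n → Fin (m + 1), tupleWeight p j * (maxEntry j : ℝ)

lemma mul_le_expMaxBinom (hn : 0 < n) {p : ℝ} (hp : 0 ≤ p) (hp' : p ≤ 1) :
    m * p ≤ expMaxBinom n m p := by
  rw [← sum_binomWeight_mul_id,
    ← sum_tupleWeight_mul_apply p (⟨0, hn⟩ : Fin n) (fun k : Fin (m + 1) => ((k : ℕ) : ℝ))]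
  refine Finset.sum_le_sum fun j _ => mul_le_mul_of_nonneg_left ?_ (tupleWeight_nonneg hp hp' j)
  exact_mod_cast le_maxEntry j _

lemma expMaxBinom_le_mul {p : ℝ} (hp : 0 ≤ p) (hp' : p ≤ 1) :
    expMaxBinom n m p ≤ n * (m * p) := by
  have h : ∑ i : Fin n, ∑ j : Fin n → Fin (m + 1), tupleWeight p j * ((j i : ℕ) : ℝ) =
      n * (m * p) := by
    simp_rw [fun i => sum_tupleWeight_mul_apply (n := n) p i
      (fun k : Fin (m + 1) => ((k : ℕ) : ℝ)), sum_binomWeight_mul_id]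
    simp
  rw [← h, Finset.sum_comm]
  refine Finset.sum_le_sum fun j _ => ?_
  rw [← Finset.mul_sum]
  refine mul_le_mul_of_nonneg_left ?_ (tupleWeight_nonneg hp hp' j)
  exact_mod_cast maxEntry_le_sum j

lemma mul_expMaxBinom_le (hn : 0 < n) {p l : ℝ} (hp : 0 ≤ p) (hp' : p ≤ 1) :
    l * expMaxBinom n m p ≤ Real.log n + m * Real.log (p * Real.exp l + (1 - p)) := by
  have hM : 0 < p * Real.exp l + (1 - p) := by
    rcases hp.eq_or_lt with rfl | hp0
    · simp
    · have := mul_pos hp0 (Real.exp_pos l)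
      linarith
  have hn' : (0 : ℝ) < n := by exact_mod_cast hn
  set A := Real.log n + m * Real.log (p * Real.exp l + (1 - p)) with hA
  have hexpA : Real.exp A = n * (p * Real.exp l + (1 - p)) ^ m := by
    rw [hA, Real.exp_add, Real.exp_log hn', Real.exp_nat_mul, Real.exp_log hM]
  have hsum : ∑ j : Fin n → Fin (m + 1), tupleWeight p j * Real.exp (l * maxEntry j) ≤
      Real.exp A := by
    have h : ∑ i : Fin n, ∑ j : Fin n → Fin (m + 1),
        tupleWeight p j * Real.exp (l * ((j i : ℕ) : ℝ)) = Real.exp A := by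
      simp_rw [fun i => sum_tupleWeight_mul_apply (n := n) p i
        (fun k : Fin (m + 1) => Real.exp (l * ((k : ℕ) : ℝ))), sum_binomWeight_mul_exp]
      simp [hexpA]
    rw [← h, Finset.sum_comm]
    refine Finset.sum_le_sum fun j _ => ?_
    rw [← Finset.mul_sum]
    refine mul_le_mul_of_nonneg_left ?_ (tupleWeight_nonneg hp hp' j)
    obtain ⟨i, hi⟩ := exists_eq_maxEntry hn j
    rw [hi]
    exact Finset.single_le_sum (f := fun i => Real.exp (l * ((j i : ℕ) : ℝ)))
      (fun _ _ => (Real.exp_pos _).le) (Finset.mem_univ i)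
  have hlin : l * expMaxBinom n m p - A ≤
      Real.exp (-A) * ∑ j : Fin n → Fin (m + 1), tupleWeight p j * Real.exp (l * maxEntry j) - 1 := by
    have h1 : l * expMaxBinom n m p - A =
        ∑ j : Fin n → Fin (m + 1), tupleWeight p j * (l * maxEntry j - A) := by
      simp only [mul_sub, Finset.sum_sub_distrib, ← Finset.sum_mul, sum_tupleWeight, expMaxBinom,
        Finset.mul_sum, one_mul]
      congr 1
      exact Finset.sum_congr rfl fun j _ => by ring
    have h2 : Real.exp (-A) * ∑ j : Fin n → Fin (m + 1),
          tupleWeight p j * Real.exp (l * maxEntry j) - 1 =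
        ∑ j : Fin n → Fin (m + 1), tupleWeight p j * (Real.exp (l * maxEntry j - A) - 1) := by
      simp only [mul_sub, Finset.sum_sub_distrib, mul_one, sum_tupleWeight, Finset.mul_sum]
      congr 1
      refine Finset.sum_congr rfl fun j _ => ?_
      rw [sub_eq_add_neg, Real.exp_add]
      ring
    rw [h1, h2]
    refine Finset.sum_le_sum fun j _ => mul_le_mul_of_nonneg_left ?_ (tupleWeight_nonneg hp hp' j)
    have := Real.add_one_le_exp (l * maxEntry j - A)
    linarith
  have h3 := mul_le_mul_of_nonneg_left hsum (Real.exp_pos (-A)).le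
  rw [← Real.exp_add, neg_add_cancel, Real.exp_zero] at h3
  linarith

/-- A lower bound for the expected maximum: it exceeds the mean by nearly `y` as soon as some
variable is likely to do so. -/
lemma expMaxBinom_sub_ge (hn : 0 < n) {p y : ℝ} (hp : 0 ≤ p) (hp' : p ≤ 1) :
    y * (1 - (∑ k : Fin (m + 1),
      binomWeight m p k * if ((k : ℕ) : ℝ) < m * p + y then 1 else 0) ^ n) - √m ≤
      expMaxBinom n m p - m * p := by
  have hmean : ∑ j : Fin n → Fin (m + 1),
      tupleWeight p j * |((j ⟨0, hn⟩ : ℕ) : ℝ) - m * p| ≤ √m := by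
    rw [sum_tupleWeight_mul_apply p (⟨0, hn⟩ : Fin n)
      (fun k : Fin (m + 1) => |((k : ℕ) : ℝ) - m * p|)]
    refine Real.le_sqrt_of_sq_le ?_
    have hcs := Finset.sum_sq_le_sum_mul_sum_of_sq_le_mul (Finset.univ : Finset (Fin (m + 1)))
      (r := fun k => binomWeight m p k * |((k : ℕ) : ℝ) - m * p|)
      (f := fun k => binomWeight m p k)
      (g := fun k => binomWeight m p k * (((k : ℕ) : ℝ) - m * p) ^ 2)
      (fun k _ => binomWeight_nonneg hp hp' k)
      (fun k _ => mul_nonneg (binomWeight_nonneg hp hp' k) (sq_nonneg _))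
      (fun k _ => by rw [mul_pow, sq_abs]; exact le_of_eq (by ring))
    rw [sum_binomWeight, sum_binomWeight_mul_sq, one_mul] at hcs
    refine hcs.trans ?_
    have : p * (1 - p) ≤ 1 := by nlinarith
    have hm : (0 : ℝ) ≤ m := m.cast_nonneg
    nlinarith
  have hkey : ∀ j : Fin n → Fin (m + 1),
      y - y * (if ∀ i, ((j i : ℕ) : ℝ) < m * p + y then 1 else 0) -
        |((j ⟨0, hn⟩ : ℕ) : ℝ) - m * p| ≤ (maxEntry j : ℝ) - m * p := by
    intro j
    split_ifs with h
    · have h0 : ((j ⟨0, hn⟩ : ℕ) : ℝ) ≤ maxEntry j := by exact_mod_cast le_maxEntry j _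
      have := neg_abs_le (((j ⟨0, hn⟩ : ℕ) : ℝ) - m * p)
      linarith
    · push Not at h
      obtain ⟨i, hi⟩ := h
      have h0 : ((j i : ℕ) : ℝ) ≤ maxEntry j := by exact_mod_cast le_maxEntry j _
      have := abs_nonneg (((j ⟨0, hn⟩ : ℕ) : ℝ) - m * p)
      linarith
  have hsum := Finset.sum_le_sum fun (j : Fin n → Fin (m + 1)) (_ : j ∈ Finset.univ) =>
    mul_le_mul_of_nonneg_left (hkey j) (tupleWeight_nonneg hp hp' j)
  simp only [mul_sub, Finset.sum_sub_distrib, ← Finset.sum_mul, sum_tupleWeight, one_mul] at hsum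
  rw [← sum_tupleWeight_lt]
  have hy' : ∑ j : Fin n → Fin (m + 1), tupleWeight p j *
      (y * if ∀ i, ((j i : ℕ) : ℝ) < m * p + y then 1 else 0) =
      y * ∑ j : Fin n → Fin (m + 1), tupleWeight p j *
        (if ∀ i, ((j i : ℕ) : ℝ) < m * p + y then 1 else 0) := by
    rw [Finset.mul_sum]
    exact Finset.sum_congr rfl fun j _ => by ring
  rw [hy'] at hsum
  rw [expMaxBinom]
  linarith

end BinomialTuples

section IntegralRepresentation

lemma integral_rpow_mul_one_sub_rpow {a b : ℝ} (ha : 0 < a) (hb : 0 < b) :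
    ∫ x in (0 : ℝ)..1, x ^ (a - 1) * (1 - x) ^ (b - 1) = ProbabilityTheory.beta a b := by
  rw [ProbabilityTheory.beta_eq_betaIntegralReal a b ha hb, Complex.betaIntegral]
  have h : ∀ x ∈ Set.uIcc (0 : ℝ) 1, (x : ℂ) ^ ((a : ℂ) - 1) * (1 - (x : ℂ)) ^ ((b : ℂ) - 1) =
      ((x ^ (a - 1) * (1 - x) ^ (b - 1) : ℝ) : ℂ) := by
    intro x hx
    rw [Set.uIcc_of_le zero_le_one] at hx
    push_cast
    rw [Complex.ofReal_cpow hx.1, Complex.ofReal_cpow (by linarith [hx.2])]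
    push_cast
    rfl
  rw [intervalIntegral.integral_congr h, intervalIntegral.integral_ofReal, Complex.ofReal_re]

lemma integral_pow_mul_one_sub_pow {N t : ℕ} (ht : 1 ≤ t) (htN : t ≤ N) :
    ∫ x in (0 : ℝ)..1, x ^ (t - 1) * (1 - x) ^ (N - t) = 1 / (N.choose t * t) := by
  obtain ⟨s, rfl⟩ := Nat.exists_eq_add_of_le' ht
  obtain ⟨r, rfl⟩ := Nat.exists_eq_add_of_le htN
  have h := integral_rpow_mul_one_sub_rpow (a := s + 1) (b := r + 1) (by positivity) (by positivity)
  simp only [add_sub_cancel_right, Real.rpow_natCast] at h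
  rw [Nat.add_sub_cancel, Nat.add_sub_cancel_left, h, ProbabilityTheory.beta]
  have hc : (s + 1 : ℝ) + (r + 1) = ((s + 1 + r : ℕ) : ℝ) + 1 := by push_cast; ring
  rw [hc, Real.Gamma_nat_eq_factorial, Real.Gamma_nat_eq_factorial, Real.Gamma_nat_eq_factorial,
    ← Nat.add_choose_mul_factorial_mul_factorial (s + 1) r, Nat.factorial_succ,
    Nat.choose_symm_add]
  have h1 : ((s + 1 + r).choose (s + 1) : ℝ) ≠ 0 := by
    exact_mod_cast (Nat.choose_pos (Nat.le_add_right _ _)).ne'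
  have h2 : (s.factorial : ℝ) ≠ 0 := by exact_mod_cast s.factorial_ne_zero
  have h3 : (r.factorial : ℝ) ≠ 0 := by exact_mod_cast r.factorial_ne_zero
  push_cast
  field_simp

variable {n m : ℕ}

lemma tupleWeight_eq (p : ℝ) (j : Fin n → Fin (m + 1)) :
    tupleWeight p j = (∏ i, (m.choose (j i : ℕ) : ℝ)) * p ^ (∑ i, (j i : ℕ)) *
      (1 - p) ^ (n * m - ∑ i, (j i : ℕ)) := by
  have h : n * m - ∑ i, (j i : ℕ) = ∑ i, (m - (j i : ℕ)) := by
    have h' : ∑ i, (m - (j i : ℕ)) + ∑ i, (j i : ℕ) = n * m := by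
      rw [← Finset.sum_add_distrib, Finset.sum_congr rfl fun i _ =>
        Nat.sub_add_cancel (Nat.lt_succ_iff.mp (j i).isLt)]
      simp
    omega
  simp only [tupleWeight, binomWeight, Finset.prod_mul_distrib, Finset.prod_pow_eq_pow_sum, h]

lemma sum_entries_le (j : Fin n → Fin (m + 1)) : ∑ i, (j i : ℕ) ≤ n * m := by
  simpa using Finset.sum_le_card_nsmul Finset.univ (fun i => (j i : ℕ)) m
    fun i _ => Nat.lt_succ_iff.mp (j i).isLt

lemma S_eq_sum (n m : ℕ) :
    S n m = ∑ j : Fin n → Fin (m + 1), (∏ i, (m.choose (j i : ℕ) : ℝ)) * (maxEntry j : ℝ) *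
      (1 / ((n * m).choose (∑ i, (j i : ℕ)) * (∑ i, (j i : ℕ) : ℕ))) := by
  have hfib := Finset.sum_fiberwise_of_maps_to (s := Finset.univ)
    (t := Finset.range (n * m + 1)) (g := fun j : Fin n → Fin (m + 1) => ∑ i, (j i : ℕ))
    (fun j _ => Finset.mem_range_succ_iff.mpr (sum_entries_le j))
    (fun j => (∏ i, (m.choose (j i : ℕ) : ℝ)) * (maxEntry j : ℝ) *
      (1 / ((n * m).choose (∑ i, (j i : ℕ)) * (∑ i, (j i : ℕ) : ℕ))))
  rw [← hfib, S, Finset.range_eq_Ico, Finset.sum_eq_sum_Ico_succ_bot (Nat.succ_pos _)]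
  have h0 : ∑ j : Fin n → Fin (m + 1) with ∑ i, (j i : ℕ) = 0,
      (∏ i, (m.choose (j i : ℕ) : ℝ)) * (maxEntry j : ℝ) *
      (1 / ((n * m).choose (∑ i, (j i : ℕ)) * (∑ i, (j i : ℕ) : ℕ))) = 0 := by
    refine Finset.sum_eq_zero fun j hj => ?_
    rw [(Finset.mem_filter.mp hj).2]
    simp
  rw [h0, zero_add, zero_add]
  refine Finset.sum_congr (by ext; simp) fun t _ => ?_
  rw [expMaxHyper, Finset.sum_div]
  refine Finset.sum_congr rfl fun j hj => ?_
  rw [(Finset.mem_filter.mp hj).2]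
  ring

/-- For `p ≠ 0`, the quotient `expMaxBinom n m p / p` is a polynomial in `p`. -/
lemma expMaxBinom_div_eq {p : ℝ} (hp : p ≠ 0) :
    expMaxBinom n m p / p =
      ∑ j : Fin n → Fin (m + 1), (∏ i, (m.choose (j i : ℕ) : ℝ)) * (maxEntry j : ℝ) *
        (p ^ ((∑ i, (j i : ℕ)) - 1) * (1 - p) ^ (n * m - ∑ i, (j i : ℕ))) := by
  rw [expMaxBinom, Finset.sum_div]
  refine Finset.sum_congr rfl fun j _ => ?_
  rw [tupleWeight_eq]
  rcases Nat.eq_zero_or_pos (∑ i, (j i : ℕ)) with h | h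
  · have : maxEntry j = 0 := Nat.le_zero.mp (h ▸ maxEntry_le_sum j)
    simp [this]
  · obtain ⟨s, hs⟩ := Nat.exists_eq_add_of_le' h
    rw [hs, Nat.add_sub_cancel, pow_succ]
    field_simp

/-- The amount by which the expected maximum exceeds the mean, divided by `p`. -/
noncomputable def excessRatio (n m : ℕ) (p : ℝ) : ℝ := (expMaxBinom n m p - m * p) / p

lemma excessRatio_eqOn : ∀ p ∈ Set.uIoc (0 : ℝ) 1, excessRatio n m p =
      (∑ j : Fin n → Fin (m + 1), (∏ i, (m.choose (j i : ℕ) : ℝ)) * (maxEntry j : ℝ) *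
        (p ^ ((∑ i, (j i : ℕ)) - 1) * (1 - p) ^ (n * m - ∑ i, (j i : ℕ)))) - m := by
  intro p hp
  rw [Set.uIoc_of_le zero_le_one] at hp
  rw [excessRatio, sub_div, expMaxBinom_div_eq hp.1.ne', mul_div_cancel_right₀ _ hp.1.ne']

lemma intervalIntegrable_excessRatio (n m : ℕ) :
    IntervalIntegrable (excessRatio n m) MeasureTheory.volume 0 1 := by
  refine IntervalIntegrable.congr (fun p hp => (excessRatio_eqOn p hp).symm) ?_
  exact Continuous.intervalIntegrable (by fun_prop) _ _

/-- Randomizing the number of dealt cards turns the hypergeometric counts into independent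
binomial ones; the weights `1 / t` are exactly those produced by a uniform parameter `p`. -/
lemma S_sub_eq_integral (n m : ℕ) : S n m - m = ∫ p in (0 : ℝ)..1, excessRatio n m p := by
  rw [intervalIntegral.integral_congr_ae
      (Filter.Eventually.of_forall (excessRatio_eqOn (n := n) (m := m))),
    intervalIntegral.integral_sub (Continuous.intervalIntegrable (by fun_prop) _ _) (by simp),
    intervalIntegral.integral_finsetSum
      fun j _ => Continuous.intervalIntegrable (by fun_prop) _ _, S_eq_sum]
  simp only [intervalIntegral.integral_const_mul, intervalIntegral.integral_const, sub_zero,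
    one_smul]
  congr 1
  refine Finset.sum_congr rfl fun j _ => ?_
  rcases Nat.eq_zero_or_pos (∑ i, (j i : ℕ)) with h | h
  · have : maxEntry j = 0 := Nat.le_zero.mp (h ▸ maxEntry_le_sum j)
    simp [this]
  · rw [integral_pow_mul_one_sub_pow h (sum_entries_le j)]

end IntegralRepresentation

section UpperBound

variable {n m : ℕ}

lemma exp_le_one_add_cubic {u : ℝ} (hu : |u| ≤ 1) :
    Real.exp u ≤ 1 + u + u ^ 2 / 2 + |u| ^ 3 := by
  have h := (abs_sub_le_iff.mp (Real.exp_bound hu (n := 3) (by norm_num))).1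
  have h0 : 0 ≤ |u| ^ 3 := by positivity
  norm_num [Finset.sum_range_succ, Nat.factorial] at h
  linarith

lemma log_bernoulli_mgf_le {p l : ℝ} (hp : 0 ≤ p) (hp' : p ≤ 1) (hl : 0 ≤ l) (hl' : l ≤ 1) :
    Real.log (p * Real.exp l + (1 - p)) ≤ p * l + p * (1 - p) * (l ^ 2 / 2 + l ^ 3) := by
  have hq : 0 ≤ 1 - p := by linarith
  have hfac : p * Real.exp l + (1 - p) =
      Real.exp (p * l) * (p * Real.exp (l * (1 - p)) + (1 - p) * Real.exp (-(l * p))) := by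
    have h1 : Real.exp (p * l) * Real.exp (l * (1 - p)) = Real.exp l := by
      rw [← Real.exp_add]; congr 1; ring
    have h2 : Real.exp (p * l) * Real.exp (-(l * p)) = 1 := by
      rw [← Real.exp_add, ← Real.exp_zero]; congr 1; ring
    linear_combination (-p) * h1 - (1 - p) * h2
  have hpos : 0 < p * Real.exp (l * (1 - p)) + (1 - p) * Real.exp (-(l * p)) := by
    rcases hp.eq_or_lt with rfl | hp0
    · simp
    · have := mul_pos hp0 (Real.exp_pos (l * (1 - p)))
      have := mul_nonneg hq (Real.exp_pos (-(l * p))).le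
      linarith
  have hu : |l * (1 - p)| = l * (1 - p) := abs_of_nonneg (mul_nonneg hl hq)
  have hv : |-(l * p)| = l * p := by rw [abs_neg, abs_of_nonneg (mul_nonneg hl hp)]
  have h1 := exp_le_one_add_cubic (u := l * (1 - p)) (by rw [hu]; nlinarith)
  have h2 := exp_le_one_add_cubic (u := -(l * p)) (by rw [hv]; nlinarith)
  rw [hu] at h1
  rw [hv] at h2
  rw [hfac, Real.log_mul (Real.exp_pos _).ne' hpos.ne', Real.log_exp]
  have h3 := Real.log_le_sub_one_of_pos hpos
  have h4 := mul_le_mul_of_nonneg_left h1 hp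
  have h5 := mul_le_mul_of_nonneg_left h2 hq
  have h6 : p * (1 - p) * l ^ 3 * ((1 - p) ^ 2 + p ^ 2) ≤ p * (1 - p) * l ^ 3 * 1 := by
    refine mul_le_mul_of_nonneg_left (by nlinarith) (by positivity)
  linarith

lemma expMaxBinom_sub_le (hn : 0 < n) {p l : ℝ} (hp : 0 ≤ p) (hp' : p ≤ 1) (hl : 0 < l)
    (hl' : l ≤ 1) :
    expMaxBinom n m p - m * p ≤ Real.log n / l + m * (p * (1 - p)) * (l / 2 + l ^ 2) := by
  have h1 := mul_expMaxBinom_le (m := m) (l := l) hn hp hp'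
  have h2 := mul_le_mul_of_nonneg_left (log_bernoulli_mgf_le hp hp' hl.le hl') m.cast_nonneg
  refine le_of_mul_le_mul_left ?_ hl
  have h3 : l * (Real.log n / l + m * (p * (1 - p)) * (l / 2 + l ^ 2)) =
      Real.log n + m * (p * (1 - p)) * (l ^ 2 / 2 + l ^ 3) := by
    field_simp
  rw [h3]
  linarith

lemma expMaxBinom_sub_le_sqrt_add_log (hn : 2 ≤ n) {p : ℝ} (hp : 0 ≤ p) (hp' : p ≤ 1) :
    expMaxBinom n m p - m * p ≤ 3 * (√(m * Real.log n) * √p) + 3 * Real.log n := by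
  have hL : 0 < Real.log n := Real.log_pos (by exact_mod_cast hn)
  have hmp : 0 ≤ m * p := mul_nonneg m.cast_nonneg hp
  have hvar : m * (p * (1 - p)) ≤ m * p := by
    rw [← mul_assoc]
    exact mul_le_of_le_one_right hmp (by linarith)
  have hbound : ∀ l : ℝ, 0 < l → l ≤ 1 →
      expMaxBinom n m p - m * p ≤ Real.log n / l + m * p * (2 * l) := by
    intro l hl hl'
    refine (expMaxBinom_sub_le (by omega) hp hp' hl hl').trans ?_
    have h1 : l / 2 + l ^ 2 ≤ 2 * l := by nlinarith
    have h2 : m * (p * (1 - p)) * (l / 2 + l ^ 2) ≤ m * p * (2 * l) :=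
      mul_le_mul hvar h1 (by positivity) hmp
    linarith
  rcases le_or_gt (Real.log n) (m * p) with h | h
  · have hmp0 : 0 < m * p := hL.trans_le h
    have hy : 0 < √(m * p) := Real.sqrt_pos.mpr hmp0
    have hz : 0 < √(Real.log n) := Real.sqrt_pos.mpr hL
    have hy2 := Real.sq_sqrt hmp0.le
    have hz2 := Real.sq_sqrt hL.le
    have h1 := hbound (√(Real.log n) / √(m * p)) (by positivity)
      ((div_le_one hy).mpr (Real.sqrt_le_sqrt h))
    have h2 : Real.log n / (√(Real.log n) / √(m * p)) + m * p * (2 * (√(Real.log n) / √(m * p))) =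
        3 * (√(Real.log n) * √(m * p)) := by
      nth_rewrite 1 [← hz2]
      nth_rewrite 2 [← hy2]
      field_simp
      ring
    have h3 : √(m * Real.log n) * √p = √(Real.log n) * √(m * p) := by
      rw [Real.sqrt_mul m.cast_nonneg, Real.sqrt_mul m.cast_nonneg]
      ring
    rw [h3]
    linarith
  · have h1 := hbound 1 one_pos le_rfl
    have : 0 ≤ √(m * Real.log n) * √p := by positivity
    simp only [div_one, mul_one] at h1
    linarith

end UpperBound

section LowerBound

variable {m : ℕ}

lemma exp_mul_binomWeight_le {p p' v : ℝ} (hp : 0 < p) (hpp' : p ≤ p') (hp' : p' < 1) {k : ℕ}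
    (hkm : k ≤ m) (hkv : k ≤ v) :
    Real.exp (-(v * Real.log (p' / p) + (m - v) * Real.log ((1 - p') / (1 - p)))) *
      binomWeight m p' k ≤ binomWeight m p k := by
  have hq : 0 < 1 - p := by linarith
  have hq' : 0 < 1 - p' := by linarith
  have hp0 : 0 < p' := hp.trans_le hpp'
  have hexp : ∀ r : ℝ, 0 < r → 0 < 1 - r → binomWeight m r k =
      m.choose k * Real.exp (k * Real.log r + (m - k) * Real.log (1 - r)) := by
    intro r hr hr'
    rw [binomWeight, Real.exp_add, ← Nat.cast_sub hkm, Real.exp_nat_mul, Real.exp_nat_mul,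
      Real.exp_log hr, Real.exp_log hr']
    ring
  rw [hexp p hp hq, hexp p' hp0 hq', mul_left_comm, ← Real.exp_add]
  refine mul_le_mul_of_nonneg_left (Real.exp_le_exp.mpr ?_) (Nat.cast_nonneg _)
  rw [Real.log_div hp0.ne' hp.ne', Real.log_div hq'.ne' hq.ne']
  have h1 := Real.log_le_log hp hpp'
  have h2 := Real.log_le_log hq' (by linarith : 1 - p' ≤ 1 - p)
  nlinarith [mul_nonneg (sub_nonneg.mpr hkv)
    (add_nonneg (sub_nonneg.mpr h1) (sub_nonneg.mpr h2))]

lemma one_sub_le_sum_binomWeight_window {p y : ℝ} (hp : 0 ≤ p) (hp' : p ≤ 1) (hy : 0 < y) :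
    1 - m / y ^ 2 ≤
      ∑ k : Fin (m + 1), binomWeight m p k * if |((k : ℕ) : ℝ) - m * p| ≤ y then 1 else 0 := by
  have h : ∀ k : Fin (m + 1), binomWeight m p k -
      binomWeight m p k * (((k : ℕ) : ℝ) - m * p) ^ 2 / y ^ 2 ≤
      binomWeight m p k * if |((k : ℕ) : ℝ) - m * p| ≤ y then 1 else 0 := by
    intro k
    have hb := binomWeight_nonneg (m := m) hp hp' k
    rw [mul_div_assoc, ← mul_one_sub]
    refine mul_le_mul_of_nonneg_left ?_ hb
    have h0 : 0 ≤ (((k : ℕ) : ℝ) - m * p) ^ 2 / y ^ 2 := by positivity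
    split_ifs with hk
    · linarith
    · push Not at hk
      have : 1 ≤ (((k : ℕ) : ℝ) - m * p) ^ 2 / y ^ 2 := by
        rw [one_le_div (by positivity), ← sq_abs (((k : ℕ) : ℝ) - m * p)]
        exact pow_le_pow_left₀ hy.le hk.le 2
      linarith
  have hsum := Finset.sum_le_sum fun k (_ : k ∈ Finset.univ) => h k
  rw [Finset.sum_sub_distrib, sum_binomWeight, ← Finset.sum_div, sum_binomWeight_mul_sq] at hsum
  refine le_trans ?_ hsum
  have hvar : (m : ℝ) * p * (1 - p) ≤ m := by
    have : p * (1 - p) ≤ 1 := by nlinarith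
    have hm : (0 : ℝ) ≤ m := m.cast_nonneg
    nlinarith
  have := div_le_div_of_nonneg_right hvar (sq_nonneg y)
  linarith

/-- Lower bound for a binomial upper tail, by comparison with the parameter `p' ≥ p`. -/
lemma sum_binomWeight_lt_le {p p' y : ℝ} (hp : 0 < p) (hpp' : p ≤ p') (hp' : p' < 1)
    (hy : 0 < y) :
    ∑ k : Fin (m + 1), (binomWeight m p k * if ((k : ℕ) : ℝ) < m * p' - y then 1 else 0) ≤
      1 - Real.exp (-((m * p' + y) * Real.log (p' / p) +
        (m - (m * p' + y)) * Real.log ((1 - p') / (1 - p)))) * (1 - m / y ^ 2) := by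
  have hw := mul_le_mul_of_nonneg_left
    (one_sub_le_sum_binomWeight_window (m := m) (hp.le.trans hpp') hp'.le hy)
    (Real.exp_pos (-((m * p' + y) * Real.log (p' / p) +
        (m - (m * p' + y)) * Real.log ((1 - p') / (1 - p))))).le
  have h := Finset.sum_le_sum fun (k : Fin (m + 1)) (_ : k ∈ Finset.univ) =>
    show Real.exp (-((m * p' + y) * Real.log (p' / p) +
        (m - (m * p' + y)) * Real.log ((1 - p') / (1 - p)))) *
        (binomWeight m p' k * if |((k : ℕ) : ℝ) - m * p'| ≤ y then 1 else 0) ≤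
      binomWeight m p k - binomWeight m p k * (if ((k : ℕ) : ℝ) < m * p' - y then 1 else 0) by
      have hb := binomWeight_nonneg (m := m) hp.le (hpp'.trans hp'.le) k
      by_cases hk : |((k : ℕ) : ℝ) - m * p'| ≤ y
      · have hk' := abs_le.mp hk
        rw [if_pos hk, if_neg (by linarith [hk'.1])]
        simpa using exp_mul_binomWeight_le hp hpp' hp' (Nat.lt_succ_iff.mp k.isLt)
          (by linarith [hk'.2] : ((k : ℕ) : ℝ) ≤ m * p' + y)
      · rw [if_neg hk]
        split_ifs <;> simp [hb]
  rw [← Finset.mul_sum, Finset.sum_sub_distrib, sum_binomWeight] at h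
  linarith

/-- Second order expansion of the relative entropy controlling binomial tails. -/
lemma eventually_entropy_le {p b b' κ : ℝ} (hp : 0 < p) (hp' : p < 1) (hb : 0 < b)
    (hκ : b * (b' - b / 2) / (p * (1 - p)) < κ) :
    ∀ᶠ x in 𝓝[>] (0 : ℝ), (p + b' * x) * Real.log ((p + b * x) / p) +
      (1 - (p + b' * x)) * Real.log ((1 - (p + b * x)) / (1 - p)) ≤ κ * x ^ 2 := by
  have hq : 0 < 1 - p := by linarith
  let u : ℝ → ℝ := fun x => b * x / p
  let v : ℝ → ℝ := fun x => b * x / (1 - p)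
  let Q : ℝ → ℝ := fun x => b * b' / p + (p + b' * x) * (-(b ^ 2 / p ^ 2) / 2 + 2 * b ^ 3 * x / p ^ 3)
    + b * b' / (1 - p) - (1 - (p + b' * x)) * (b ^ 2 / (1 - p) ^ 2 / 2 - 2 * b ^ 3 * x / (1 - p) ^ 3)
  have hQ : ∀ᶠ x in 𝓝[>] (0 : ℝ), Q x < κ := by
    have hcont : ContinuousAt Q 0 := by
      have : Continuous Q := by fun_prop
      exact this.continuousAt
    have h0 : Q 0 < κ := by
      convert hκ using 1
      simp only [Q]
      field_simp
      ring
    exact (hcont.eventually_lt_const h0).filter_mono nhdsWithin_le_nhds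
  have hsmall : ∀ r : ℝ, 0 < r → ∀ c : ℝ, ∀ᶠ x in 𝓝[>] (0 : ℝ), c * x < r := by
    intro r hr c
    have hcont : ContinuousAt (fun x : ℝ => c * x) 0 := by fun_prop
    exact (hcont.eventually_lt_const (by simpa using hr)).filter_mono nhdsWithin_le_nhds
  have hlog : ∀ w : ℝ, |w| ≤ 1 / 2 → Real.log (1 - w) ≤ -w - w ^ 2 / 2 + 2 * |w| ^ 3 := by
    intro w hw
    have h := (abs_le.mp (Real.abs_log_sub_add_sum_range_le (by linarith : |w| < 1) 2)).2
    norm_num [Finset.sum_range_succ] at h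
    have h2 : |w| ^ 3 / (1 - |w|) ≤ 2 * |w| ^ 3 := by
      rw [div_le_iff₀ (by linarith)]
      nlinarith [pow_nonneg (abs_nonneg w) 3]
    linarith
  filter_upwards [hQ, self_mem_nhdsWithin, hsmall (1 / 2) (by norm_num) (b / p),
    hsmall (1 / 2) (by norm_num) (b / (1 - p)), hsmall p hp (-b'), hsmall (1 - p) hq b']
    with x hQx hx hu hv hpb hqb
  have hx0 : (0 : ℝ) < x := hx
  have hu0 : 0 < u x := by positivity
  have hv0 : 0 < v x := by positivity
  have hu1 : u x ≤ 1 / 2 := by simp only [u]; rw [mul_div_right_comm]; exact hu.le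
  have hv1 : v x ≤ 1 / 2 := by simp only [v]; rw [mul_div_right_comm]; exact hv.le
  have e1 : (p + b * x) / p = 1 - -(u x) := by simp only [u]; field_simp; ring
  have e2 : (1 - (p + b * x)) / (1 - p) = 1 - v x := by simp only [v]; field_simp; ring
  have l1 := hlog (-(u x)) (by rw [abs_neg, abs_of_pos hu0]; exact hu1)
  have l2 := hlog (v x) (by rw [abs_of_pos hv0]; exact hv1)
  rw [abs_neg, abs_of_pos hu0] at l1
  rw [abs_of_pos hv0] at l2
  rw [e1, e2]
  calc _ ≤ (p + b' * x) * (-(-(u x)) - (-(u x)) ^ 2 / 2 + 2 * u x ^ 3) +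
        (1 - (p + b' * x)) * (-(v x) - (v x) ^ 2 / 2 + 2 * v x ^ 3) :=
        add_le_add (mul_le_mul_of_nonneg_left l1 (by linarith))
          (mul_le_mul_of_nonneg_left l2 (by linarith))
    _ = Q x * x ^ 2 := by
        simp only [Q, u, v]
        field_simp
        ring
    _ ≤ κ * x ^ 2 := mul_le_mul_of_nonneg_right hQx.le (sq_nonneg x)

end LowerBound

section PointwiseLimit

variable {l : Filter (ℕ × ℕ)} {p : ℝ}

lemma sqrt_div_mul_sqrt_mul {a b : ℝ} (ha : 0 < a) (hb : 0 ≤ b) : √(b / a) * √(a * b) = b := by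
  rw [← Real.sqrt_mul (by positivity), show b / a * (a * b) = b ^ 2 by field_simp,
    Real.sqrt_sq hb]

lemma mul_sqrt_div {a b : ℝ} (ha : 0 < a) : a * √(b / a) = √(a * b) := by
  rw [show a * b = a ^ 2 * (b / a) by field_simp, Real.sqrt_mul (sq_nonneg a),
    Real.sqrt_sq ha.le]

lemma tendsto_log_snd (hn : Tendsto Prod.snd l atTop) :
    Tendsto (fun q : ℕ × ℕ => Real.log q.2) l atTop :=
  Real.tendsto_log_atTop.comp (tendsto_natCast_atTop_atTop.comp hn)

lemma eventually_excess_lt (hp : 0 < p) (hp' : p < 1) (hm : Tendsto Prod.fst l atTop)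
    (hn : Tendsto Prod.snd l atTop)
    (hx : Tendsto (fun q : ℕ × ℕ => √(Real.log q.2 / q.1)) l (𝓝 0)) {a : ℝ}
    (ha : √(2 * (p * (1 - p))) < a) :
    ∀ᶠ q in l, (expMaxBinom q.2 q.1 p - q.1 * p) / √(q.1 * Real.log q.2) < a := by
  have hv : 0 < p * (1 - p) := mul_pos hp (by linarith)
  set w := √(2 * (p * (1 - p))) with hw
  have hw0 : 0 < w := Real.sqrt_pos.mpr (by positivity)
  have hw2 : w ^ 2 = 2 * (p * (1 - p)) := Real.sq_sqrt (by positivity)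
  let s : ℝ := 2 / w
  have hs : 0 < s := by positivity
  have hlim : Tendsto (fun q : ℕ × ℕ => 1 / s + p * (1 - p) *
      (s / 2 + s ^ 2 * √(Real.log q.2 / q.1))) l (𝓝 w) := by
    have h := (((hx.const_mul (s ^ 2)).const_add (s / 2)).const_mul (p * (1 - p))).const_add (1 / s)
    convert h using 2
    simp only [s, show p * (1 - p) = w ^ 2 / 2 by linarith]
    field_simp
    ring
  have hsx : Tendsto (fun q : ℕ × ℕ => s * √(Real.log q.2 / q.1)) l (𝓝 0) := by
    simpa using hx.const_mul s
  filter_upwards [hlim.eventually_lt_const ha, hsx.eventually_le_const one_pos,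
    hm.eventually_ge_atTop 1, hn.eventually_ge_atTop 2] with q hq hsq hq1 hq2
  obtain ⟨m, n⟩ := q
  dsimp only at *
  have hm0 : (0 : ℝ) < m := by exact_mod_cast hq1
  have hL : 0 < Real.log n := Real.log_pos (by exact_mod_cast hq2)
  have hR : 0 < √(m * Real.log n) := Real.sqrt_pos.mpr (by positivity)
  have hx0 : 0 < √(Real.log n / m) := Real.sqrt_pos.mpr (by positivity)
  refine lt_of_le_of_lt ?_ hq
  rw [div_le_iff₀ hR]
  refine (expMaxBinom_sub_le (by omega) hp.le hp'.le (mul_pos hs hx0) hsq).trans (le_of_eq ?_)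
  have e1 := sqrt_div_mul_sqrt_mul hm0 hL.le
  have e2 := mul_sqrt_div (b := Real.log n) hm0
  generalize √(Real.log n / m) = x at *
  generalize √(m * Real.log n) = R at *
  rw [← e1, ← e2]
  field_simp

lemma eventually_lt_excess (hp : 0 < p) (hp' : p < 1) (hm : Tendsto Prod.fst l atTop)
    (hn : Tendsto Prod.snd l atTop)
    (hx : Tendsto (fun q : ℕ × ℕ => √(Real.log q.2 / q.1)) l (𝓝 0)) {a₀ : ℝ}
    (ha₀ : a₀ < √(2 * (p * (1 - p)))) :
    ∀ᶠ q in l, a₀ < (expMaxBinom q.2 q.1 p - q.1 * p) / √(q.1 * Real.log q.2) := by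
  have hv : 0 < p * (1 - p) := mul_pos hp (by linarith)
  set w := √(2 * (p * (1 - p))) with hw
  have hw0 : 0 < w := Real.sqrt_pos.mpr (by positivity)
  have hw2 : w ^ 2 = 2 * (p * (1 - p)) := Real.sq_sqrt (by positivity)
  obtain ⟨a, ha1, haw⟩ := exists_between (max_lt ha₀ hw0)
  have ha₀a : a₀ < a := (le_max_left _ _).trans_lt ha1
  have ha : 0 < a := (le_max_right _ _).trans_lt ha1
  let η : ℝ := (w - a) / 6
  have hη : 0 < η := by simp only [η]; linarith
  have hκ0 : (a + η) * (a + 2 * η - (a + η) / 2) / (p * (1 - p)) < 1 := by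
    rw [div_lt_one hv]
    have : a + 3 * η < w := by simp only [η]; linarith
    nlinarith
  obtain ⟨κ, hκ, hκ1⟩ := exists_between hκ0
  have hLog := tendsto_log_snd hn
  have hx' : Tendsto (fun q : ℕ × ℕ => √(Real.log q.2 / q.1)) l (𝓝[>] 0) := by
    refine tendsto_nhdsWithin_iff.mpr ⟨hx, ?_⟩
    filter_upwards [hm.eventually_ge_atTop 1, hLog.eventually_gt_atTop 0] with q hq1 hq2
    have : (0 : ℝ) < q.1 := by exact_mod_cast hq1
    exact Real.sqrt_pos.mpr (by positivity)
  have hent := hx'.eventually (eventually_entropy_le hp hp' (by positivity : 0 < a + η) hκ)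
  have hbx : ∀ᶠ q : ℕ × ℕ in l, (a + η) * √(Real.log q.2 / q.1) < 1 - p := by
    have h : Tendsto (fun q : ℕ × ℕ => (a + η) * √(Real.log q.2 / q.1)) l (𝓝 0) := by
      simpa using hx.const_mul (a + η)
    exact h.eventually_lt_const (by linarith)
  let g : ℝ → ℝ := fun L => Real.exp ((1 - κ) * L) * (1 - 1 / (η ^ 2 * L))
  have hg : Tendsto g atTop atTop := by
    refine Tendsto.atTop_mul_pos one_pos
      (Real.tendsto_exp_atTop.comp (tendsto_id.const_mul_atTop (by linarith))) ?_
    have h : Tendsto (fun L : ℝ => 1 / (η ^ 2 * L)) atTop (𝓝 0) :=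
      tendsto_const_nhds.div_atTop (tendsto_id.const_mul_atTop (by positivity))
    simpa using h.const_sub 1
  have hlim : Tendsto (fun q : ℕ × ℕ => a * (1 - Real.exp (-g (Real.log q.2))) -
      1 / √(Real.log q.2)) l (𝓝 a) := by
    have h1 : Tendsto (fun q : ℕ × ℕ => Real.exp (-g (Real.log q.2))) l (𝓝 0) :=
      Real.tendsto_exp_neg_atTop_nhds_zero.comp (hg.comp hLog)
    have h2 : Tendsto (fun q : ℕ × ℕ => 1 / √(Real.log q.2)) l (𝓝 0) :=
      tendsto_const_nhds.div_atTop (Real.tendsto_sqrt_atTop.comp hLog)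
    simpa using ((h1.const_sub 1).const_mul a).sub h2
  have hηL : ∀ᶠ q : ℕ × ℕ in l, 1 / η ^ 2 < Real.log q.2 := hLog.eventually_gt_atTop _
  filter_upwards [hlim.eventually_const_lt ha₀a, hent, hbx, hηL,
    hm.eventually_ge_atTop 1, hn.eventually_ge_atTop 2] with q hq hent hbx hηL hq1 hq2
  obtain ⟨m, n⟩ := q
  dsimp only at *
  have hm0 : (0 : ℝ) < m := by exact_mod_cast hq1
  have hn0 : (0 : ℝ) < n := by positivity
  have hL : 0 < Real.log n := Real.log_pos (by exact_mod_cast hq2)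
  have hR : 0 < √(m * Real.log n) := Real.sqrt_pos.mpr (by positivity)
  have hx0 : 0 < √(Real.log n / m) := Real.sqrt_pos.mpr (by positivity)
  have e1 := sqrt_div_mul_sqrt_mul hm0 hL.le
  have e2 := mul_sqrt_div (b := Real.log n) hm0
  have e3 : √(m : ℝ) = √(m * Real.log n) * (1 / √(Real.log n)) := by
    have : √(Real.log n) ≠ 0 := (Real.sqrt_pos.mpr hL).ne'
    rw [Real.sqrt_mul hm0.le]
    field_simp
  have e4 : √(m * Real.log n) ^ 2 = m * Real.log n := Real.sq_sqrt (by positivity)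
  have e5 : √(Real.log n / m) ^ 2 * m = Real.log n := by
    rw [Real.sq_sqrt (by positivity)]
    field_simp
  refine hq.trans_le ?_
  rw [le_div_iff₀ hR]
  have hlow := expMaxBinom_sub_ge (n := n) (m := m) (y := a * √(m * Real.log n))
    (by omega) hp.le hp'.le
  refine le_trans ?_ hlow
  have htail := sum_binomWeight_lt_le (m := m) (p' := p + (a + η) * √(Real.log n / m))
    (y := η * √(m * Real.log n)) hp (le_add_of_nonneg_right (by positivity)) (by linarith)
    (by positivity)
  have hy : m * (p + (a + η) * √(Real.log n / m)) - η * √(m * Real.log n) =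
      m * p + a * √(m * Real.log n) := by
    linear_combination (a + η) * e2
  have hv' : m * (p + (a + η) * √(Real.log n / m)) + η * √(m * Real.log n) =
      m * (p + (a + 2 * η) * √(Real.log n / m)) := by
    linear_combination (-η) * e2
  have hvar : (m : ℝ) / (η * √(m * Real.log n)) ^ 2 = 1 / (η ^ 2 * Real.log n) := by
    rw [mul_pow, e4]
    field_simp
  rw [hy, hv', hvar] at htail
  set P := ∑ k : Fin (m + 1), binomWeight m p k *
    if ((k : ℕ) : ℝ) < m * p + a * √(m * Real.log n) then 1 else 0 with hP
  have hP0 : 0 ≤ P := Finset.sum_nonneg fun k _ =>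
    mul_nonneg (binomWeight_nonneg hp.le hp'.le k) (by split_ifs <;> norm_num)
  have hfac : 0 ≤ 1 - 1 / (η ^ 2 * Real.log n) := by
    rw [sub_nonneg, div_le_one (by positivity)]
    rw [div_lt_iff₀ (by positivity)] at hηL
    linarith
  have hexp : Real.exp (-(κ * Real.log n)) * (1 - 1 / (η ^ 2 * Real.log n)) ≤ 1 - P := by
    refine le_trans (mul_le_mul_of_nonneg_right (Real.exp_le_exp.mpr ?_) hfac)
      (le_sub_comm.mp htail)
    have h := mul_le_mul_of_nonneg_right hent hm0.le
    rw [mul_assoc κ, e5] at h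
    linarith
  have hPn : P ^ n ≤ Real.exp (-g (Real.log n)) := by
    have h1 : P ≤ Real.exp (-(1 - P)) := by
      have := Real.add_one_le_exp (-(1 - P))
      linarith
    refine (pow_le_pow_left₀ hP0 h1 n).trans ?_
    rw [← Real.exp_nat_mul]
    refine Real.exp_le_exp.mpr ?_
    have h2 := mul_le_mul_of_nonneg_left hexp hn0.le
    have h3 : g (Real.log n) =
        n * (Real.exp (-(κ * Real.log n)) * (1 - 1 / (η ^ 2 * Real.log n))) := by
      simp only [g]
      rw [sub_mul, one_mul, sub_eq_add_neg, Real.exp_add, Real.exp_log hn0]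
      ring
    linarith
  rw [e3]
  have := mul_le_mul_of_nonneg_left hPn (by positivity : 0 ≤ a * √(m * Real.log n))
  linarith

lemma tendsto_excess (hp : 0 < p) (hp' : p < 1) (hm : Tendsto Prod.fst l atTop)
    (hn : Tendsto Prod.snd l atTop)
    (hx : Tendsto (fun q : ℕ × ℕ => √(Real.log q.2 / q.1)) l (𝓝 0)) :
    Tendsto (fun q : ℕ × ℕ => (expMaxBinom q.2 q.1 p - q.1 * p) / √(q.1 * Real.log q.2)) l
      (𝓝 √(2 * (p * (1 - p)))) :=
  tendsto_order.mpr ⟨fun _ ha => eventually_lt_excess hp hp' hm hn hx ha,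
    fun _ ha => eventually_excess_lt hp hp' hm hn hx ha⟩

end PointwiseLimit

section IntegralLimit

lemma excessRatio_nonneg {n m : ℕ} (hn : 0 < n) {p : ℝ} (hp : 0 < p) (hp' : p ≤ 1) :
    0 ≤ excessRatio n m p :=
  div_nonneg (sub_nonneg.mpr (mul_le_expMaxBinom hn hp.le hp')) hp.le

lemma excessRatio_le_mul {n m : ℕ} {p : ℝ} (hp : 0 < p) (hp' : p ≤ 1) :
    excessRatio n m p ≤ n * m := by
  rw [excessRatio, div_le_iff₀ hp]
  have h1 := expMaxBinom_le_mul (n := n) (m := m) hp.le hp'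
  have h2 : 0 ≤ m * p := mul_nonneg m.cast_nonneg hp.le
  linarith

lemma excessRatio_le {n m : ℕ} (hn : 2 ≤ n) {p : ℝ} (hp : 0 < p) (hp' : p ≤ 1) :
    excessRatio n m p ≤ √(m * Real.log n) * (3 * p ^ (-(1 / 2) : ℝ)) + 3 * Real.log n * p⁻¹ := by
  rw [excessRatio, div_le_iff₀ hp]
  refine (expMaxBinom_sub_le_sqrt_add_log hn hp.le hp').trans (le_of_eq ?_)
  have h : p ^ (-(1 / 2) : ℝ) * p = √p := by
    rw [Real.sqrt_eq_rpow]
    nth_rewrite 2 [← Real.rpow_one p]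
    rw [← Real.rpow_add hp]
    norm_num
  rw [add_mul, mul_assoc (3 * Real.log n), inv_mul_cancel₀ hp.ne', ← h]
  ring

lemma intervalIntegrable_const_mul_rpow_neg_half :
    IntervalIntegrable (fun p : ℝ => 3 * p ^ (-(1 / 2) : ℝ)) MeasureTheory.volume 0 1 :=
  (intervalIntegral.intervalIntegrable_rpow' (by norm_num)).const_mul 3

/-- The normalized excess, truncated so as to be dominated by an integrable function. -/
noncomputable def truncatedExcess (n m : ℕ) (p : ℝ) : ℝ :=
  min (excessRatio n m p / √(m * Real.log n)) (3 * p ^ (-(1 / 2) : ℝ))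

lemma intervalIntegrable_truncatedExcess (n m : ℕ) :
    IntervalIntegrable (truncatedExcess n m) MeasureTheory.volume 0 1 := by
  have h1 := (intervalIntegrable_excessRatio n m).div_const √(m * Real.log n)
  have h2 := intervalIntegrable_const_mul_rpow_neg_half
  rw [intervalIntegrable_iff] at *
  exact MeasureTheory.Integrable.inf h1 h2

lemma integral_excess_sub_truncatedExcess_bounds {n m : ℕ} (hn : 2 ≤ n) (hm : 1 ≤ m) :
    0 ≤ (∫ p in (0 : ℝ)..1, (excessRatio n m p / √(m * Real.log n) - truncatedExcess n m p)) ∧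
    (∫ p in (0 : ℝ)..1, (excessRatio n m p / √(m * Real.log n) - truncatedExcess n m p)) ≤
      (1 + 3 * Real.log n * Real.log (n * m)) / √(m * Real.log n) := by
  have hn0 : (2 : ℝ) ≤ n := by exact_mod_cast hn
  have hm0 : (1 : ℝ) ≤ m := by exact_mod_cast hm
  have hN : (1 : ℝ) ≤ n * m := by nlinarith
  have hL : 0 < Real.log n := Real.log_pos (by linarith)
  have hR : 0 < √(m * Real.log n) := Real.sqrt_pos.mpr (by positivity)
  set R := √(m * Real.log n) with hRdef
  set D : ℝ → ℝ := fun p => excessRatio n m p / R - truncatedExcess n m p with hD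
  have hD_int : IntervalIntegrable D MeasureTheory.volume 0 1 :=
    ((intervalIntegrable_excessRatio n m).div_const R).sub (intervalIntegrable_truncatedExcess n m)
  have hD0 : ∀ p, 0 ≤ D p := fun p => sub_nonneg.mpr (min_le_left _ _)
  refine ⟨intervalIntegral.integral_nonneg zero_le_one fun p _ => hD0 p, ?_⟩
  have hD1 : ∀ p, 0 < p → p ≤ 1 → D p ≤ n * m / R := by
    intro p hp hp'
    have h1 : excessRatio n m p / R ≤ n * m / R :=
      div_le_div_of_nonneg_right (excessRatio_le_mul hp hp') hR.le
    have h2 : 0 ≤ truncatedExcess n m p :=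
      le_min (div_nonneg (excessRatio_nonneg (by omega) hp hp') hR.le) (by positivity)
    simp only [hD]
    linarith
  have hD2 : ∀ p, 0 < p → p ≤ 1 → D p ≤ 3 * Real.log n / R * p⁻¹ := by
    intro p hp hp'
    have h1 : excessRatio n m p / R ≤ 3 * p ^ (-(1 / 2) : ℝ) + 3 * Real.log n / R * p⁻¹ := by
      rw [div_le_iff₀ hR]
      refine (excessRatio_le hn hp hp').trans (le_of_eq ?_)
      rw [← hRdef]
      field_simp
    have h2 : 0 ≤ 3 * Real.log n / R * p⁻¹ := by positivity
    simp only [hD, truncatedExcess, sub_le_iff_le_add]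
    rcases min_choice (excessRatio n m p / R) (3 * p ^ (-(1 / 2) : ℝ)) with h | h <;>
      rw [← hRdef, h] <;> linarith
  have hc0 : 0 < ((n : ℝ) * m)⁻¹ := by positivity
  have hc1 : ((n : ℝ) * m)⁻¹ ≤ 1 := inv_le_one_of_one_le₀ hN
  have hD_int1 : IntervalIntegrable D MeasureTheory.volume 0 ((n : ℝ) * m)⁻¹ :=
    hD_int.mono_set (by
      rw [Set.uIcc_of_le hc0.le, Set.uIcc_of_le zero_le_one]
      exact Set.Icc_subset_Icc_right hc1)
  have hD_int2 : IntervalIntegrable D MeasureTheory.volume ((n : ℝ) * m)⁻¹ 1 :=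
    hD_int.mono_set (by
      rw [Set.uIcc_of_le hc1, Set.uIcc_of_le zero_le_one]
      exact Set.Icc_subset_Icc_left hc0.le)
  rw [← intervalIntegral.integral_add_adjacent_intervals hD_int1 hD_int2]
  have b1 : ∫ p in (0 : ℝ)..((n : ℝ) * m)⁻¹, D p ≤ 1 / R := by
    refine (intervalIntegral.integral_mono_on_of_le_Ioo hc0.le hD_int1
      (intervalIntegrable_const (c := n * m / R))
      fun p hp => hD1 p hp.1 (hp.2.le.trans hc1)).trans (le_of_eq ?_)
    rw [intervalIntegral.integral_const, smul_eq_mul]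
    field_simp
    ring
  have b2 : ∫ p in ((n : ℝ) * m)⁻¹..1, D p ≤ 3 * Real.log n * Real.log (n * m) / R := by
    have hinv : IntervalIntegrable (fun p : ℝ => 3 * Real.log n / R * p⁻¹) MeasureTheory.volume
        ((n : ℝ) * m)⁻¹ 1 := by
      refine IntervalIntegrable.const_mul ?_ _
      refine intervalIntegral.intervalIntegrable_inv (fun p hp => ?_) continuousOn_id
      rw [Set.uIcc_of_le hc1] at hp
      exact (hc0.trans_le hp.1).ne'
    refine (intervalIntegral.integral_mono_on_of_le_Ioo hc1 hD_int2 hinv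
      fun p hp => hD2 p (hc0.trans hp.1) hp.2.le).trans (le_of_eq ?_)
    rw [intervalIntegral.integral_const_mul, integral_inv_of_pos hc0 one_pos, one_div, inv_inv]
    ring
  rw [add_div]
  exact add_le_add b1 b2

lemma integral_limit_density :
    ∫ p in (0 : ℝ)..1, √2 * (p ^ ((1 / 2 : ℝ) - 1) * (1 - p) ^ ((3 / 2 : ℝ) - 1)) =
      Real.pi / √2 := by
  rw [intervalIntegral.integral_const_mul,
    integral_rpow_mul_one_sub_rpow (by norm_num) (by norm_num), ProbabilityTheory.beta,
    show (1 / 2 : ℝ) + 3 / 2 = 2 by norm_num, show (3 / 2 : ℝ) = 1 / 2 + 1 by norm_num,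
    Real.Gamma_add_one (by norm_num), Real.Gamma_two, Real.Gamma_one_half_eq]
  have h2 : √2 * √2 = 2 := Real.mul_self_sqrt (by norm_num)
  have hpi : √Real.pi * √Real.pi = Real.pi := Real.mul_self_sqrt Real.pi_pos.le
  field_simp
  linear_combination √Real.pi * √Real.pi * h2 + 2 * hpi

lemma sqrt_div_eq_limit_density {p : ℝ} (hp : 0 < p) (hp' : p < 1) :
    √(2 * (p * (1 - p))) / p = √2 * (p ^ ((1 / 2 : ℝ) - 1) * (1 - p) ^ ((3 / 2 : ℝ) - 1)) := by
  have hq : 0 < 1 - p := by linarith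
  rw [Real.sqrt_mul (by norm_num), Real.sqrt_mul hp.le, Real.rpow_sub hp, Real.rpow_one,
    ← Real.sqrt_eq_rpow, show (3 / 2 : ℝ) - 1 = 1 / 2 by norm_num, ← Real.sqrt_eq_rpow]
  ring

lemma limit_density_le {p : ℝ} (hp : 0 < p) (hp' : p < 1) :
    √2 * (p ^ ((1 / 2 : ℝ) - 1) * (1 - p) ^ ((3 / 2 : ℝ) - 1)) ≤ 3 * p ^ (-(1 / 2) : ℝ) := by
  have h1 : √2 ≤ 3 := Real.sqrt_le_iff.mpr ⟨by norm_num, by norm_num⟩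
  have h2 : (1 - p) ^ ((3 / 2 : ℝ) - 1) ≤ 1 :=
    Real.rpow_le_one (by linarith) (by linarith) (by norm_num)
  rw [show (1 / 2 : ℝ) - 1 = -(1 / 2) by norm_num]
  have h3 : 0 ≤ p ^ (-(1 / 2) : ℝ) := by positivity
  exact mul_le_mul h1 (mul_le_of_le_one_right h3 h2)
    (mul_nonneg h3 (Real.rpow_nonneg (by linarith) _)) (by norm_num)

variable {l : Filter (ℕ × ℕ)}

lemma tendsto_integral_truncatedExcess [l.IsCountablyGenerated]
    (hm : Tendsto Prod.fst l atTop) (hn : Tendsto Prod.snd l atTop)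
    (hx : Tendsto (fun q : ℕ × ℕ => √(Real.log q.2 / q.1)) l (𝓝 0)) :
    Tendsto (fun q : ℕ × ℕ => ∫ p in (0 : ℝ)..1, truncatedExcess q.2 q.1 p) l
      (𝓝 (Real.pi / √2)) := by
  rw [← integral_limit_density]
  refine intervalIntegral.tendsto_integral_filter_of_dominated_convergence
    (fun p : ℝ => 3 * p ^ (-(1 / 2) : ℝ)) ?_ ?_ intervalIntegrable_const_mul_rpow_neg_half ?_
  · exact Eventually.of_forall fun q =>
      (intervalIntegrable_iff.mp (intervalIntegrable_truncatedExcess q.2 q.1)).aestronglyMeasurable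
  · filter_upwards [hn.eventually_ge_atTop 1] with q hq
    refine Eventually.of_forall fun p hp => ?_
    rw [Set.uIoc_of_le zero_le_one] at hp
    have hp0 : 0 < p := hp.1
    rw [Real.norm_of_nonneg]
    · exact min_le_right _ _
    · exact le_min (div_nonneg (excessRatio_nonneg hq hp.1 hp.2) (Real.sqrt_nonneg _))
        (by positivity)
  · have hne : ∀ᵐ p : ℝ, p ≠ 1 := by
      simp [MeasureTheory.ae_iff]
    filter_upwards [hne] with p hp1 hp
    rw [Set.uIoc_of_le zero_le_one] at hp
    have hp' : p < 1 := lt_of_le_of_ne hp.2 hp1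
    have h := ((tendsto_excess hp.1 hp' hm hn hx).div_const p).min
      (tendsto_const_nhds (x := 3 * p ^ (-(1 / 2) : ℝ)))
    rw [sqrt_div_eq_limit_density hp.1 hp', min_eq_left (limit_density_le hp.1 hp')] at h
    refine h.congr fun q => ?_
    rw [truncatedExcess, excessRatio, div_right_comm]

lemma tendsto_S_normalized [l.IsCountablyGenerated]
    (hm : Tendsto Prod.fst l atTop) (hn : Tendsto Prod.snd l atTop)
    (hx : Tendsto (fun q : ℕ × ℕ => √(Real.log q.2 / q.1)) l (𝓝 0))
    (hr : Tendsto (fun q : ℕ × ℕ => (1 + 3 * Real.log q.2 * Real.log (q.2 * q.1)) /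
      √(q.1 * Real.log q.2)) l (𝓝 0)) :
    Tendsto (fun q : ℕ × ℕ => (S q.2 q.1 - q.1) / √(q.1 * Real.log q.2)) l
      (𝓝 (Real.pi / √2)) := by
  have hrem : Tendsto (fun q : ℕ × ℕ => ∫ p in (0 : ℝ)..1,
      (excessRatio q.2 q.1 p / √(q.1 * Real.log q.2) - truncatedExcess q.2 q.1 p)) l (𝓝 0) := by
    refine tendsto_of_tendsto_of_tendsto_of_le_of_le' tendsto_const_nhds hr ?_ ?_
    all_goals
      filter_upwards [hm.eventually_ge_atTop 1, hn.eventually_ge_atTop 2] with q hq1 hq2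
    · exact (integral_excess_sub_truncatedExcess_bounds hq2 hq1).1
    · exact (integral_excess_sub_truncatedExcess_bounds hq2 hq1).2
  have h := hrem.add (tendsto_integral_truncatedExcess hm hn hx)
  rw [zero_add] at h
  refine h.congr fun q => ?_
  rw [intervalIntegral.integral_sub ((intervalIntegrable_excessRatio _ _).div_const _)
    (intervalIntegrable_truncatedExcess _ _), sub_add_cancel, intervalIntegral.integral_div,
    S_sub_eq_integral]

end IntegralLimit

section Regime

variable {l : Filter (ℕ × ℕ)}

lemma tendsto_log_cube_div {c ε : ℝ} (hc : 0 < c) (hε : 0 < ε)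
    (hm : Tendsto Prod.fst l atTop)
    (hreg : ∀ᶠ q : ℕ × ℕ in l, Real.log q.2 ^ ((3 : ℝ) + ε) ≤ c * q.1) :
    Tendsto (fun q : ℕ × ℕ => Real.log q.2 ^ 3 / q.1) l (𝓝 0) := by
  have hpow : Tendsto (fun q : ℕ × ℕ => c ^ (3 / (3 + ε)) * (q.1 : ℝ) ^ (-(ε / (3 + ε)))) l
      (𝓝 0) := by
    have h := (tendsto_rpow_neg_atTop (by positivity : 0 < ε / (3 + ε))).comp
      (tendsto_natCast_atTop_atTop.comp hm)
    simpa using h.const_mul (c ^ (3 / (3 + ε)))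
  refine tendsto_of_tendsto_of_tendsto_of_le_of_le' tendsto_const_nhds hpow ?_ ?_
  · exact Eventually.of_forall fun q =>
      div_nonneg (pow_nonneg (Real.log_natCast_nonneg _) _) (Nat.cast_nonneg _)
  · filter_upwards [hreg, hm.eventually_ge_atTop 1] with q hq hq1
    have hm0 : (0 : ℝ) < q.1 := by exact_mod_cast hq1
    have hL := Real.log_natCast_nonneg q.2
    rw [div_le_iff₀ hm0]
    have h := Real.rpow_le_rpow (Real.rpow_nonneg hL _) hq (by positivity : 0 ≤ 3 / (3 + ε))
    rw [← Real.rpow_mul hL, mul_div_cancel₀ _ (by positivity : 3 + ε ≠ 0),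
      Real.mul_rpow hc.le hm0.le] at h
    have e1 : Real.log q.2 ^ (3 : ℝ) = Real.log q.2 ^ 3 := by norm_cast
    have e2 : (q.1 : ℝ) ^ (-(ε / (3 + ε))) * q.1 = (q.1 : ℝ) ^ (3 / (3 + ε)) := by
      nth_rewrite 2 [← Real.rpow_one (q.1 : ℝ)]
      rw [← Real.rpow_add hm0]
      congr 1
      field_simp
      ring
    rw [mul_assoc, e2, ← e1]
    exact h

lemma tendsto_sqrt_log_div (hn : Tendsto Prod.snd l atTop)
    (h3 : Tendsto (fun q : ℕ × ℕ => Real.log q.2 ^ 3 / q.1) l (𝓝 0)) :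
    Tendsto (fun q : ℕ × ℕ => √(Real.log q.2 / q.1)) l (𝓝 0) := by
  have hs : Tendsto (fun q : ℕ × ℕ => √(Real.log q.2 ^ 3 / q.1)) l (𝓝 0) := by
    simpa using h3.sqrt
  refine tendsto_of_tendsto_of_tendsto_of_le_of_le' tendsto_const_nhds hs
    (Eventually.of_forall fun q => Real.sqrt_nonneg _) ?_
  filter_upwards [(tendsto_log_snd hn).eventually_ge_atTop 1] with q hq
  exact Real.sqrt_le_sqrt (div_le_div_of_nonneg_right (le_self_pow₀ hq (by norm_num))
    (Nat.cast_nonneg _))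

lemma tendsto_log_mul_log_div (hm : Tendsto Prod.fst l atTop) (hn : Tendsto Prod.snd l atTop)
    (h3 : Tendsto (fun q : ℕ × ℕ => Real.log q.2 ^ 3 / q.1) l (𝓝 0)) :
    Tendsto (fun q : ℕ × ℕ => (1 + 3 * Real.log q.2 * Real.log (q.2 * q.1)) /
      √(q.1 * Real.log q.2)) l (𝓝 0) := by
  have hmR : Tendsto (fun q : ℕ × ℕ => (q.1 : ℝ)) l atTop := tendsto_natCast_atTop_atTop.comp hm
  have t1 : Tendsto (fun q : ℕ × ℕ => 1 / √(q.1 : ℝ)) l (𝓝 0) :=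
    tendsto_const_nhds.div_atTop (Real.tendsto_sqrt_atTop.comp hmR)
  have t2 : Tendsto (fun q : ℕ × ℕ => √(Real.log q.2 ^ 3 / q.1)) l (𝓝 0) := by
    simpa using h3.sqrt
  have t3 : Tendsto (fun q : ℕ × ℕ => √(Real.log q.1 ^ 4 / q.1)) l (𝓝 0) := by
    have h := (Real.tendsto_pow_log_div_mul_add_atTop 1 0 4 one_ne_zero).comp hmR
    simpa [Function.comp_def] using h.sqrt
  have hsum : Tendsto (fun q : ℕ × ℕ => 1 / √(q.1 : ℝ) + 6 * √(Real.log q.2 ^ 3 / q.1) +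
      3 * √(Real.log q.1 ^ 4 / q.1)) l (𝓝 0) := by
    simpa using (t1.add (t2.const_mul 6)).add (t3.const_mul 3)
  refine tendsto_of_tendsto_of_tendsto_of_le_of_le' tendsto_const_nhds hsum ?_ ?_
  · filter_upwards [hm.eventually_ge_atTop 1, hn.eventually_ge_atTop 1] with q hq1 hq2
    have h1 : (1 : ℝ) ≤ q.1 := by exact_mod_cast hq1
    have h2 : (1 : ℝ) ≤ q.2 := by exact_mod_cast hq2
    have := Real.log_nonneg (one_le_mul_of_one_le_of_one_le h2 h1)
    have := Real.log_nonneg h2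
    positivity
  · filter_upwards [hm.eventually_ge_atTop 1, hn.eventually_ge_atTop 1,
      (tendsto_log_snd hn).eventually_ge_atTop 1] with q hq1 hq2 hL
    have hm0 : (0 : ℝ) < q.1 := by exact_mod_cast hq1
    have hn0 : (0 : ℝ) < q.2 := by exact_mod_cast hq2
    have hL0 : 0 < Real.log q.2 := by linarith
    have hsm : 0 < √(q.1 : ℝ) := Real.sqrt_pos.mpr hm0
    have hsL : 1 ≤ √(Real.log q.2) := Real.one_le_sqrt.mpr hL
    rw [Real.log_mul hn0.ne' hm0.ne', Real.sqrt_div (by positivity), Real.sqrt_div (by positivity),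
      Real.sqrt_mul hm0.le, show Real.log q.1 ^ 4 = (Real.log q.1 ^ 2) ^ 2 by ring,
      Real.sqrt_sq (sq_nonneg _), show Real.log q.2 ^ 3 = Real.log q.2 ^ 2 * Real.log q.2 by ring,
      Real.sqrt_mul (sq_nonneg _), Real.sqrt_sq hL0.le]
    have hs2 := Real.mul_self_sqrt hL0.le
    rw [div_le_iff₀ (by positivity)]
    generalize Real.log q.1 = M at *
    generalize Real.log q.2 = L at *
    generalize √L = s at *
    have e : (1 / √(q.1 : ℝ) + 6 * (L * s / √(q.1 : ℝ)) + 3 * (M ^ 2 / √(q.1 : ℝ))) *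
        (√(q.1 : ℝ) * s) = s + 6 * (L * (s * s)) + 3 * M ^ 2 * s := by
      field_simp
    rw [e, hs2]
    nlinarith [sq_nonneg (L - M), sq_nonneg M, sq_nonneg L]

end Regime

theorem stmt0 (c ε : ℝ) (hc : 0 < c) (hε : 0 < ε) :
    ∀ δ > 0, ∃ N : ℕ, ∀ m n : ℕ, N ≤ m → N ≤ n →
      (Real.log n) ^ ((3 : ℝ) + ε) ≤ c * m →
      |S n m - m - Real.pi / Real.sqrt 2 * Real.sqrt (m * Real.log n)| ≤
        δ * Real.sqrt (m * Real.log n) := by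
  intro δ hδ
  let A : Set (ℕ × ℕ) := {q | Real.log q.2 ^ ((3 : ℝ) + ε) ≤ c * q.1}
  have hm : Tendsto Prod.fst ((atTop : Filter (ℕ × ℕ)) ⊓ 𝓟 A) atTop :=
    (tendsto_fst.mono_left (prod_atTop_atTop_eq (α := ℕ) (β := ℕ)).ge).mono_left inf_le_left
  have hn : Tendsto Prod.snd ((atTop : Filter (ℕ × ℕ)) ⊓ 𝓟 A) atTop :=
    (tendsto_snd.mono_left (prod_atTop_atTop_eq (α := ℕ) (β := ℕ)).ge).mono_left inf_le_left
  have h3 := tendsto_log_cube_div hc hε hm (mem_inf_of_right (mem_principal_self A))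
  have hlim := tendsto_S_normalized hm hn (tendsto_sqrt_log_div hn h3)
    (tendsto_log_mul_log_div hm hn h3)
  have hev := hlim.eventually (Metric.ball_mem_nhds _ hδ)
  rw [eventually_inf_principal, eventually_atTop] at hev
  obtain ⟨⟨a, b⟩, hab⟩ := hev
  refine ⟨max (max a b) 2, fun m n hNm hNn hreg => ?_⟩
  have h := hab (m, n) ⟨by simp only; omega, by simp only; omega⟩ hreg
  have hL : 0 < Real.log n := Real.log_pos (by exact_mod_cast (by omega : 1 < n))
  have hm0 : (0 : ℝ) < m := by exact_mod_cast (by omega : 0 < m)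
  have hR : 0 < √(m * Real.log n) := Real.sqrt_pos.mpr (by positivity)
  rw [Real.dist_eq] at h
  have e : S n m - m - Real.pi / √2 * √(m * Real.log n) =
      ((S n m - m) / √(m * Real.log n) - Real.pi / √2) * √(m * Real.log n) := by
    rw [sub_mul, div_mul_cancel₀ _ hR.ne']
  rw [e, abs_mul, abs_of_pos hR]
  exact mul_le_mul_of_nonneg_right h.le hR.le
end

section
/- Fix an integer n ≥ 1. Then lim_{m→∞} (S_{n,m} − m)/√m = (π/2)·M_n, where M_n is the expected value of the maximum of n independent standard normal random variables. That is, S_{n,m} = m + (π/2)M_n√m + o_n(√m) as m → ∞ with n fixed. -/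
open Finset MeasureTheory ProbabilityTheory

/-- `M n`: the expected value of the maximum of `n` i.i.d. standard normal random variables. -/
noncomputable def gaussMaxExp (n : ℕ) : ℝ :=
  ∫ x : Fin n → ℝ, (⨆ i, x i) ∂(Measure.pi fun _ : Fin n => gaussianReal 0 1)

lemma measureReal_le_abs_le_of_sq_integral_le_one {μ : Measure ℝ} [IsProbabilityMeasure μ]
    (hint : Integrable (fun x => x ^ 2) μ) (hle : ∫ x, x ^ 2 ∂μ ≤ 1) {t : ℝ} (ht : 0 ≤ t) :
    μ.real {x | t ≤ |x|} ≤ 2 * (1 + t ^ 2)⁻¹ := by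
  have h := mul_meas_ge_le_integral_of_nonneg (μ := μ) (f := fun x => 1 + x ^ 2)
    (Filter.Eventually.of_forall fun x => by positivity) ((integrable_const 1).add hint) (1 + t ^ 2)
  rw [integral_add (integrable_const 1) hint] at h
  have hset : {x : ℝ | 1 + t ^ 2 ≤ 1 + x ^ 2} = {x | t ≤ |x|} := by
    ext x
    simp only [Set.mem_ofPred_eq, add_le_add_iff_left]
    rw [sq_le_sq, abs_of_nonneg ht]
  rw [hset] at h
  simp only [integral_const, probReal_univ, one_smul] at h
  rw [← div_eq_mul_inv, le_div_iff₀ (by positivity)]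
  linarith

lemma abs_ciSup_le_sum_abs {n : ℕ} (hn : 1 ≤ n) (x : Fin n → ℝ) :
    |⨆ i, x i| ≤ ∑ i, |x i| := by
  have : Nonempty (Fin n) := ⟨⟨0, hn⟩⟩
  obtain ⟨i, hi⟩ := exists_eq_ciSup_of_finite (f := x)
  rw [← hi]
  exact Finset.single_le_sum (f := fun i => |x i|) (fun _ _ => abs_nonneg _) (mem_univ i)

lemma integrable_abs_of_integrable_sq {μ : Measure ℝ} [IsProbabilityMeasure μ]
    (hint : Integrable (fun x => x ^ 2) μ) : Integrable (fun x => |x|) μ := by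
  refine ((integrable_const 1).add hint).mono' (by fun_prop) (Filter.Eventually.of_forall fun x => ?_)
  simp only [Real.norm_eq_abs, abs_abs, Pi.add_apply]
  rw [← sq_abs]
  nlinarith [sq_nonneg (|x| - 1), abs_nonneg x]

lemma integrable_ciSup_pi {n : ℕ} (hn : 1 ≤ n) {μ : Measure ℝ} [IsProbabilityMeasure μ]
    (hint : Integrable (fun x => x ^ 2) μ) :
    Integrable (fun x : Fin n → ℝ => ⨆ i, x i) (Measure.pi fun _ : Fin n => μ) := by
  have habs := integrable_abs_of_integrable_sq hint
  have hsum : Integrable (fun x : Fin n → ℝ => ∑ i, |x i|) (Measure.pi fun _ : Fin n => μ) :=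
    integrable_finsetSum _ fun i _ =>
      integrable_comp_eval (μ := fun _ : Fin n => μ) (i := i) (f := fun x : ℝ => |x|) habs
  refine hsum.mono' (Measurable.aestronglyMeasurable ?_)
    (Filter.Eventually.of_forall fun x => abs_ciSup_le_sum_abs hn x)
  exact Measurable.iSup fun i => measurable_pi_apply i

lemma abs_integral_ciSup_pi_le {n : ℕ} (hn : 1 ≤ n) {μ : Measure ℝ} [IsProbabilityMeasure μ]
    (hint : Integrable (fun x => x ^ 2) μ) (hle : ∫ x, x ^ 2 ∂μ ≤ 1) :
    |∫ x : Fin n → ℝ, (⨆ i, x i) ∂(Measure.pi fun _ : Fin n => μ)| ≤ n := by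
  have habs := integrable_abs_of_integrable_sq hint
  have hone : ∫ x, |x| ∂μ ≤ 1 := by
    have h : ∫ x, |x| ∂μ ≤ ∫ x, (1 / 2 + 1 / 2 * x ^ 2) ∂μ := by
      refine integral_mono habs ((integrable_const _).add (hint.const_mul _)) fun x => ?_
      simp only
      rw [← sq_abs]
      nlinarith [sq_nonneg (|x| - 1)]
    rw [integral_add (integrable_const _) (hint.const_mul _), integral_const_mul] at h
    simp only [integral_const, probReal_univ, one_smul] at h
    linarith
  have hi (i : Fin n) : Integrable (fun x : Fin n → ℝ => |x i|) (Measure.pi fun _ : Fin n => μ) :=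
    integrable_comp_eval (μ := fun _ : Fin n => μ) (i := i) (f := fun x : ℝ => |x|) habs
  calc |∫ x : Fin n → ℝ, (⨆ i, x i) ∂(Measure.pi fun _ : Fin n => μ)|
      ≤ ∫ x : Fin n → ℝ, |⨆ i, x i| ∂(Measure.pi fun _ : Fin n => μ) := abs_integral_le_integral_abs
    _ ≤ ∫ x : Fin n → ℝ, ∑ i, |x i| ∂(Measure.pi fun _ : Fin n => μ) :=
        integral_mono (integrable_ciSup_pi hn hint).abs (integrable_finsetSum _ fun i _ => hi i)
          fun x => abs_ciSup_le_sum_abs hn x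
    _ = ∑ i : Fin n, ∫ x, |x| ∂μ := by
        rw [integral_finsetSum _ fun i _ => hi i]
        refine sum_congr rfl fun i _ => ?_
        exact integral_comp_eval (μ := fun _ : Fin n => μ) (i := i) (f := fun x : ℝ => |x|)
          habs.aestronglyMeasurable
    _ ≤ ∑ _i : Fin n, (1 : ℝ) := sum_le_sum fun _ _ => hone
    _ = n := by simp

/-- Layer cake formula for the expected maximum of i.i.d. real random variables. -/
lemma integral_ciSup_pi_eq {n : ℕ} (hn : 1 ≤ n) {μ : Measure ℝ} [IsProbabilityMeasure μ]
    (hint : Integrable (fun x => x ^ 2) μ) :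
    ∫ x : Fin n → ℝ, (⨆ i, x i) ∂(Measure.pi fun _ : Fin n => μ) =
      (∫ t in Set.Ioi (0 : ℝ), (1 - μ.real (Set.Iic t) ^ n)) -
        ∫ t in Set.Ioi (0 : ℝ), μ.real (Set.Iio (-t)) ^ n := by
  have : Nonempty (Fin n) := ⟨⟨0, hn⟩⟩
  have hI := integrable_ciSup_pi hn hint
  have hpi (s : Set ℝ) :
      (Measure.pi fun _ : Fin n => μ).real (Set.univ.pi fun _ => s) = μ.real s ^ n := by
    simp [Measure.real, Measure.pi_pi]
  have hpos : Integrable (fun x : Fin n → ℝ => max (⨆ i, x i) 0) (Measure.pi fun _ => μ) :=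
    hI.pos_part
  have hneg : Integrable (fun x : Fin n → ℝ => max (-⨆ i, x i) 0) (Measure.pi fun _ => μ) :=
    hI.neg_part
  have hsplit : ∫ x : Fin n → ℝ, (⨆ i, x i) ∂(Measure.pi fun _ : Fin n => μ) =
      (∫ x : Fin n → ℝ, max (⨆ i, x i) 0 ∂(Measure.pi fun _ : Fin n => μ)) -
        ∫ x : Fin n → ℝ, max (-⨆ i, x i) 0 ∂(Measure.pi fun _ : Fin n => μ) := by
    rw [← integral_sub hpos hneg]
    refine integral_congr_ae (Filter.Eventually.of_forall fun x => ?_)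
    simp only
    rcases le_total 0 (⨆ i, x i) with h | h
    · rw [max_eq_left h, max_eq_right (by linarith)]; ring
    · rw [max_eq_right h, max_eq_left (by linarith)]; ring
  rw [hsplit, hpos.integral_eq_integral_meas_lt (Filter.Eventually.of_forall fun x => le_max_right _ _),
    hneg.integral_eq_integral_meas_lt (Filter.Eventually.of_forall fun x => le_max_right _ _)]
  congr 1
  · refine setIntegral_congr_fun measurableSet_Ioi fun t ht => ?_
    have hset : {x : Fin n → ℝ | t < max (⨆ i, x i) 0} = (Set.univ.pi fun _ => Set.Iic t)ᶜ := by
      ext x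
      have : ¬ t < 0 := not_lt.2 (le_of_lt ht)
      simp [lt_ciSup_iff (Set.finite_range x).bddAbove, this, Pi.le_def]
    simp only [hset]
    rw [probReal_compl_eq_one_sub (MeasurableSet.univ_pi fun _ => measurableSet_Iic), hpi]
  · refine setIntegral_congr_fun measurableSet_Ioi fun t ht => ?_
    have hset : {x : Fin n → ℝ | t < max (-⨆ i, x i) 0} = Set.univ.pi fun _ => Set.Iio (-t) := by
      ext x
      have : ¬ t < 0 := not_lt.2 (le_of_lt ht)
      simp only [Set.mem_ofPred_eq, lt_max_iff, this, or_false, Set.mem_pi, Set.mem_univ,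
        forall_const, Set.mem_Iio]
      rw [lt_neg]
      constructor
      · exact fun h i => (le_ciSup (Set.finite_range x).bddAbove i).trans_lt h
      · intro h
        obtain ⟨i, hi⟩ := exists_eq_ciSup_of_finite (f := x)
        rw [← hi]
        exact h i
    simp only [hset, hpi]

/-- If probability measures on `ℝ` with second moments at most one converge weakly to an atomless
one, then the expected maxima of `n` independent samples converge. -/
lemma tendsto_integral_ciSup_pi {n : ℕ} (hn : 1 ≤ n) {ν : ℕ → ProbabilityMeasure ℝ}
    {μ : ProbabilityMeasure ℝ} (hatom : ∀ x, (μ : Measure ℝ) {x} = 0)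
    (hlim : Filter.Tendsto ν Filter.atTop (nhds μ))
    (hνint : ∀ k, Integrable (fun x => x ^ 2) (ν k : Measure ℝ))
    (hνle : ∀ k, ∫ x, x ^ 2 ∂(ν k : Measure ℝ) ≤ 1)
    (hμint : Integrable (fun x => x ^ 2) (μ : Measure ℝ)) :
    Filter.Tendsto
      (fun k => ∫ x : Fin n → ℝ, (⨆ i, x i) ∂(Measure.pi fun _ : Fin n => (ν k : Measure ℝ)))
      Filter.atTop
      (nhds (∫ x : Fin n → ℝ, (⨆ i, x i) ∂(Measure.pi fun _ : Fin n => (μ : Measure ℝ)))) := by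
  simp_rw [fun k => integral_ciSup_pi_eq hn (hνint k), integral_ciSup_pi_eq hn hμint]
  have hconv (s : Set ℝ) (x : ℝ) (hs : frontier s = {x}) : Filter.Tendsto
      (fun k => (ν k : Measure ℝ).real s) Filter.atTop (nhds ((μ : Measure ℝ).real s)) :=
    (ENNReal.tendsto_toReal (measure_ne_top _ _)).comp
      (ProbabilityMeasure.tendsto_measure_of_null_frontier_of_tendsto' hlim
        (by rw [hs]; exact hatom x))
  have htail (k : ℕ) {t : ℝ} (ht : 0 ≤ t) :=
    measureReal_le_abs_le_of_sq_integral_le_one (hνint k) (hνle k) ht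
  have hbound : Integrable (fun t : ℝ => (n : ℝ) * (2 * (1 + t ^ 2)⁻¹))
      (volume.restrict (Set.Ioi 0)) :=
    ((integrable_inv_one_add_sq.const_mul _).const_mul _).restrict
  refine Filter.Tendsto.sub ?_ ?_
  · refine tendsto_integral_of_dominated_convergence _ (fun k => ?_) hbound (fun k => ?_) ?_
    · have : Monotone fun t => (ν k : Measure ℝ).real (Set.Iic t) := fun a b hab =>
        measureReal_mono (Set.Iic_subset_Iic.2 hab)
      exact (measurable_const.sub (this.measurable.pow_const n)).aestronglyMeasurable
    · refine (ae_restrict_iff' measurableSet_Ioi).2 (Filter.Eventually.of_forall fun t ht => ?_)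
      have ht' : (0 : ℝ) ≤ t := le_of_lt ht
      have h0 : 0 ≤ (ν k : Measure ℝ).real (Set.Iic t) := measureReal_nonneg
      have h1 : (ν k : Measure ℝ).real (Set.Iic t) ≤ 1 := measureReal_le_one
      have hc : 1 - (ν k : Measure ℝ).real (Set.Iic t) ≤ 2 * (1 + t ^ 2)⁻¹ := by
        rw [← probReal_compl_eq_one_sub measurableSet_Iic]
        refine (measureReal_mono fun x hx => ?_).trans (htail k ht')
        simp only [Set.mem_compl_iff, Set.mem_Iic, not_le] at hx
        exact hx.le.trans (le_abs_self x)
      rw [Real.norm_of_nonneg (sub_nonneg.2 (pow_le_one₀ h0 h1))]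
      have hb := one_add_mul_le_pow (a := (ν k : Measure ℝ).real (Set.Iic t) - 1)
        (by linarith) n
      rw [add_sub_cancel] at hb
      have hn0 : (0 : ℝ) ≤ n := Nat.cast_nonneg n
      nlinarith
    · refine Filter.Eventually.of_forall fun t => ?_
      exact ((hconv _ t frontier_Iic).pow n).const_sub 1
  · refine tendsto_integral_of_dominated_convergence _ (fun k => ?_) hbound (fun k => ?_) ?_
    · have : Antitone fun t : ℝ => (ν k : Measure ℝ).real (Set.Iio (-t)) := fun a b hab =>
        measureReal_mono (Set.Iio_subset_Iio (neg_le_neg hab))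
      exact (this.measurable.pow_const n).aestronglyMeasurable
    · refine (ae_restrict_iff' measurableSet_Ioi).2 (Filter.Eventually.of_forall fun t ht => ?_)
      have ht' : (0 : ℝ) ≤ t := le_of_lt ht
      have h0 : 0 ≤ (ν k : Measure ℝ).real (Set.Iio (-t)) := measureReal_nonneg
      have h1 : (ν k : Measure ℝ).real (Set.Iio (-t)) ≤ 1 := measureReal_le_one
      have hc : (ν k : Measure ℝ).real (Set.Iio (-t)) ≤ 2 * (1 + t ^ 2)⁻¹ := by
        refine (measureReal_mono fun x hx => ?_).trans (htail k ht')
        simp only [Set.mem_Iio] at hx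
        exact (le_neg_of_le_neg hx.le).trans (neg_le_abs x)
      rw [Real.norm_of_nonneg (pow_nonneg h0 n)]
      have hp := pow_le_of_le_one h0 h1 (by omega : n ≠ 0)
      have hn1 : (1 : ℝ) ≤ n := by exact_mod_cast hn
      nlinarith
    · refine Filter.Eventually.of_forall fun t => ?_
      exact (hconv _ (-t) frontier_Iio).pow n

/-- The probability that a binomial random variable with parameters `m` and `p` equals `j`. -/
noncomputable def binomialWeight (m : ℕ) (p : ℝ) (j : ℕ) : ℝ :=
  (m.choose j : ℝ) * p ^ j * (1 - p) ^ (m - j)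

lemma binomialWeight_nonneg {m : ℕ} {p : ℝ} (hp : p ∈ Set.Ioo (0 : ℝ) 1) (j : ℕ) :
    0 ≤ binomialWeight m p j := by
  have h0 := hp.1.le
  have h1 : 0 ≤ 1 - p := by linarith [hp.2]
  unfold binomialWeight
  positivity

lemma eval_bernsteinPolynomial (m : ℕ) (p : ℝ) (j : ℕ) :
    (bernsteinPolynomial ℝ m j).eval p = binomialWeight m p j := by
  simp [bernsteinPolynomial, binomialWeight]

lemma sum_binomialWeight (m : ℕ) (p : ℝ) : ∑ j : Fin (m + 1), binomialWeight m p j = 1 := by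
  have h := congrArg (Polynomial.eval p) (bernsteinPolynomial.sum ℝ m)
  simp only [Polynomial.eval_finsetSum, eval_bernsteinPolynomial, Polynomial.eval_one] at h
  rwa [Fin.sum_univ_eq_sum_range (fun j => binomialWeight m p j)]

lemma sum_binomialWeight_mul_sub (m : ℕ) (p : ℝ) :
    ∑ j : Fin (m + 1), binomialWeight m p j * ((j : ℕ) - m * p) = 0 := by
  have h := congrArg (Polynomial.eval p) (bernsteinPolynomial.sum_smul ℝ m)
  simp only [Polynomial.eval_finsetSum, eval_bernsteinPolynomial,
    Polynomial.eval_X, nsmul_eq_mul, Polynomial.eval_mul, Polynomial.eval_natCast] at h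
  rw [← Fin.sum_univ_eq_sum_range (fun j : ℕ => (j : ℝ) * binomialWeight m p j)] at h
  simp only [mul_sub, sum_sub_distrib, ← sum_mul, sum_binomialWeight, one_mul]
  rw [← h, sub_eq_zero]
  exact sum_congr rfl fun j _ => mul_comm _ _

lemma sum_binomialWeight_mul_sub_sq (m : ℕ) (p : ℝ) :
    ∑ j : Fin (m + 1), binomialWeight m p j * ((j : ℕ) - m * p) ^ 2 = m * (p * (1 - p)) := by
  have h := congrArg (Polynomial.eval p) (bernsteinPolynomial.variance ℝ m)
  simp only [Polynomial.eval_finsetSum, eval_bernsteinPolynomial,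
    Polynomial.eval_X, nsmul_eq_mul, Polynomial.eval_mul, Polynomial.eval_pow,
    Polynomial.eval_sub, Polynomial.eval_natCast, Polynomial.eval_one] at h
  rw [← Fin.sum_univ_eq_sum_range (fun j : ℕ => (m * p - (j : ℝ)) ^ 2 * binomialWeight m p j)] at h
  rw [← mul_assoc, ← h]
  exact sum_congr rfl fun j _ => by ring

/-- The binomial distribution with parameters `m` and `p`, as a measure on `Fin (m + 1)`. -/
noncomputable def binomialLaw (m : ℕ) (p : ℝ) : Measure (Fin (m + 1)) :=
  Measure.sum fun j : Fin (m + 1) => ENNReal.ofReal (binomialWeight m p j) • Measure.dirac j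

lemma binomialLaw_singleton (m : ℕ) (p : ℝ) (j : Fin (m + 1)) :
    binomialLaw m p {j} = ENNReal.ofReal (binomialWeight m p j) := by
  rw [binomialLaw, Measure.sum_apply _ (measurableSet_singleton j), tsum_fintype,
    Finset.sum_eq_single j]
  · simp
  · intro i _ hij
    simp [hij]
  · simp

lemma isProbabilityMeasure_binomialLaw {m : ℕ} {p : ℝ} (hp : p ∈ Set.Ioo (0 : ℝ) 1) :
    IsProbabilityMeasure (binomialLaw m p) := by
  refine ⟨?_⟩
  rw [← Finset.coe_univ, ← sum_measure_singleton]
  simp_rw [binomialLaw_singleton]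
  rw [← ENNReal.ofReal_sum_of_nonneg fun (j : Fin (m + 1)) _ => binomialWeight_nonneg hp j,
    sum_binomialWeight, ENNReal.ofReal_one]

lemma integral_binomialLaw {E : Type*} [NormedAddCommGroup E] [NormedSpace ℝ E] [CompleteSpace E]
    {m : ℕ} {p : ℝ} (hp : p ∈ Set.Ioo (0 : ℝ) 1) (f : Fin (m + 1) → E) :
    ∫ j, f j ∂(binomialLaw m p) = ∑ j : Fin (m + 1), binomialWeight m p j • f j := by
  have := isProbabilityMeasure_binomialLaw (m := m) hp
  rw [integral_fintype (Integrable.of_finite)]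
  refine sum_congr rfl fun j _ => ?_
  rw [Measure.real, binomialLaw_singleton, ENNReal.toReal_ofReal (binomialWeight_nonneg hp j)]

/-- The standardization of the value `j` of a binomial random variable. -/
noncomputable def standardize (m : ℕ) (p : ℝ) (j : Fin (m + 1)) : ℝ :=
  ((j : ℕ) - m * p) / (√m * √(p * (1 - p)))

/-- The law of a standardized binomial random variable. -/
noncomputable def stdBinomialLaw (m : ℕ) (p : ℝ) : Measure ℝ :=
  (binomialLaw m p).map (standardize m p)

lemma measurable_standardize (m : ℕ) (p : ℝ) : Measurable (standardize m p) :=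
  measurable_of_finite _

lemma isProbabilityMeasure_stdBinomialLaw {m : ℕ} {p : ℝ} (hp : p ∈ Set.Ioo (0 : ℝ) 1) :
    IsProbabilityMeasure (stdBinomialLaw m p) :=
  have := isProbabilityMeasure_binomialLaw (m := m) hp
  Measure.isProbabilityMeasure_map (measurable_standardize m p).aemeasurable

lemma integral_stdBinomialLaw {E : Type*} [NormedAddCommGroup E] [NormedSpace ℝ E] [CompleteSpace E]
    {m : ℕ} {p : ℝ} (hp : p ∈ Set.Ioo (0 : ℝ) 1) {f : ℝ → E} (hf : StronglyMeasurable f) :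
    ∫ x, f x ∂(stdBinomialLaw m p) =
      ∑ j : Fin (m + 1), binomialWeight m p j • f (standardize m p j) := by
  rw [stdBinomialLaw, integral_map (measurable_standardize m p).aemeasurable
    hf.aestronglyMeasurable, integral_binomialLaw hp]

lemma integrable_sq_stdBinomialLaw {m : ℕ} {p : ℝ} (hp : p ∈ Set.Ioo (0 : ℝ) 1) :
    Integrable (fun x => x ^ 2) (stdBinomialLaw m p) := by
  have := isProbabilityMeasure_binomialLaw (m := m) hp
  rw [stdBinomialLaw, integrable_map_measure (by fun_prop)
    (measurable_standardize m p).aemeasurable]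
  exact Integrable.of_finite

lemma integral_id_stdBinomialLaw {m : ℕ} {p : ℝ} (hp : p ∈ Set.Ioo (0 : ℝ) 1) :
    ∫ x, x ∂(stdBinomialLaw m p) = 0 := by
  rw [integral_stdBinomialLaw hp (f := fun x => x) stronglyMeasurable_id]
  simp only [standardize, smul_eq_mul, mul_div_assoc', ← sum_div]
  rw [sum_binomialWeight_mul_sub, zero_div]

lemma integral_sq_stdBinomialLaw {m : ℕ} (hm : m ≠ 0) {p : ℝ} (hp : p ∈ Set.Ioo (0 : ℝ) 1) :
    ∫ x, x ^ 2 ∂(stdBinomialLaw m p) = 1 := by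
  rw [integral_stdBinomialLaw hp (by fun_prop)]
  have hq : 0 < p * (1 - p) := mul_pos hp.1 (by linarith [hp.2])
  have hm' : (0 : ℝ) < m := by positivity
  simp only [standardize, smul_eq_mul, div_pow, mul_div_assoc', ← sum_div]
  rw [sum_binomialWeight_mul_sub_sq, mul_pow, Real.sq_sqrt hm'.le, Real.sq_sqrt hq.le,
    div_self (by positivity)]

lemma integral_sq_stdBinomialLaw_le {m : ℕ} {p : ℝ} (hp : p ∈ Set.Ioo (0 : ℝ) 1) :
    ∫ x, x ^ 2 ∂(stdBinomialLaw m p) ≤ 1 := by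
  rcases eq_or_ne m 0 with rfl | hm
  · rw [integral_stdBinomialLaw hp (by fun_prop)]
    simp [standardize]
  · exact (integral_sq_stdBinomialLaw hm hp).le

lemma charFun_stdBinomialLaw {m : ℕ} {p : ℝ} (hp : p ∈ Set.Ioo (0 : ℝ) 1) (t : ℝ) :
    charFun (stdBinomialLaw m p) t = (charFun (stdBinomialLaw 1 p) ((√m)⁻¹ * t)) ^ m := by
  have h (k : ℕ) (s : ℝ) : charFun (stdBinomialLaw k p) s =
      ∑ j : Fin (k + 1), (binomialWeight k p j : ℂ) *
        Complex.exp (s * standardize k p j * Complex.I) := by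
    rw [charFun_apply_real, integral_stdBinomialLaw hp (by fun_prop)]
    simp
  set a : ℂ := Complex.exp (t * (1 / (√m * √(p * (1 - p))) : ℝ) * Complex.I) with ha
  set b : ℂ := Complex.exp (t * (-p / (√m * √(p * (1 - p))) : ℝ) * Complex.I) with hb
  have hm : charFun (stdBinomialLaw m p) t = (p * (a * b) + (1 - p) * b) ^ m := by
    rw [h, add_pow, ← Fin.sum_univ_eq_sum_range (fun j : ℕ =>
      ((p : ℂ) * (a * b)) ^ j * ((1 - p) * b) ^ (m - j) * (m.choose j))]
    refine sum_congr rfl fun j _ => ?_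
    have hexp : Complex.exp (t * standardize m p j * Complex.I) = a ^ (j : ℕ) * b ^ m := by
      rw [ha, hb, ← Complex.exp_nat_mul, ← Complex.exp_nat_mul, ← Complex.exp_add]
      congr 1
      simp only [standardize]
      push_cast
      ring
    have hbm : b ^ m = b ^ (j : ℕ) * b ^ (m - j) := by
      rw [← pow_add, Nat.add_sub_cancel' (Nat.lt_succ_iff.1 j.2)]
    rw [hexp, hbm, binomialWeight, mul_pow (1 - (p : ℂ))]
    push_cast
    ring
  rw [hm, h]
  congr 1
  rw [Fin.sum_univ_two, add_comm, ha, hb, ← Complex.exp_add]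
  simp only [binomialWeight, standardize]
  congr 1
  · push_cast
    congr 1
    · simp
    · congr 1
      simp
      ring
  · push_cast
    congr 1
    · simp
    · congr 1
      simp
      ring

/-- The de Moivre–Laplace theorem, as convergence of the expected maxima of `n` independent
standardized binomial random variables. -/
lemma tendsto_integral_ciSup_stdBinomialLaw {n : ℕ} (hn : 1 ≤ n) {p : ℝ}
    (hp : p ∈ Set.Ioo (0 : ℝ) 1) :
    Filter.Tendsto
      (fun m : ℕ => ∫ x : Fin n → ℝ, (⨆ i, x i) ∂(Measure.pi fun _ : Fin n => stdBinomialLaw m p))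
      Filter.atTop (nhds (gaussMaxExp n)) := by
  let ν : ℕ → ProbabilityMeasure ℝ := fun m =>
    ⟨stdBinomialLaw m p, isProbabilityMeasure_stdBinomialLaw hp⟩
  let μ : ProbabilityMeasure ℝ := ⟨gaussianReal 0 1, inferInstance⟩
  have hlim : Filter.Tendsto ν Filter.atTop (nhds μ) := by
    refine ProbabilityMeasure.tendsto_iff_tendsto_charFun.2 fun t => ?_
    have := isProbabilityMeasure_stdBinomialLaw (m := 1) hp
    have h := tendsto_charFun_inv_sqrt_mul_pow (P := stdBinomialLaw 1 p) (X := id)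
      aemeasurable_id (integral_id_stdBinomialLaw hp) (integral_sq_stdBinomialLaw one_ne_zero hp) t
    simp only [Measure.map_id] at h
    have hμ : charFun (gaussianReal 0 1) t = Complex.exp (-t ^ 2 / 2) := by
      simp [charFun_gaussianReal, neg_div]
    change Filter.Tendsto (fun m => charFun (stdBinomialLaw m p) t) _
      (nhds (charFun (gaussianReal 0 1) t))
    rw [hμ]
    exact h.congr fun m => (charFun_stdBinomialLaw hp t).symm
  have hgauss : Integrable (fun x : ℝ => x ^ 2) (gaussianReal 0 1) :=
    (memLp_id_gaussianReal 2).integrable_sq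
  have := nullSingletonClass_gaussianReal (μ := 0) (v := 1) one_ne_zero
  exact tendsto_integral_ciSup_pi hn (ν := ν) (μ := μ)
    (fun x => measure_singleton (μ := gaussianReal 0 1) x) hlim
    (fun m => integrable_sq_stdBinomialLaw hp) (fun m => integral_sq_stdBinomialLaw_le hp) hgauss

lemma ciSup_standardize {n : ℕ} (hn : 1 ≤ n) (m : ℕ) (p : ℝ) (j : Fin n → Fin (m + 1)) :
    ⨆ i, standardize m p (j i) = (maxEntry j - m * p) / (√m * √(p * (1 - p))) := by
  have : Nonempty (Fin n) := ⟨⟨0, hn⟩⟩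
  have hle (i : Fin n) : (j i : ℕ) ≤ maxEntry j :=
    Finset.le_sup (f := fun i => (j i : ℕ)) (mem_univ i)
  obtain ⟨i, -, hi⟩ := Finset.exists_mem_eq_sup univ univ_nonempty (fun i => (j i : ℕ))
  refine le_antisymm (ciSup_le fun k => ?_) ?_
  · unfold standardize
    gcongr
    exact hle k
  · refine le_ciSup_of_le (Set.finite_range _).bddAbove i ?_
    rw [standardize, maxEntry, hi]

lemma integral_ciSup_stdBinomialLaw {n : ℕ} (hn : 1 ≤ n) {m : ℕ} {p : ℝ}
    (hp : p ∈ Set.Ioo (0 : ℝ) 1) :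
    ∫ x : Fin n → ℝ, (⨆ i, x i) ∂(Measure.pi fun _ : Fin n => stdBinomialLaw m p) =
      ∑ j : Fin n → Fin (m + 1), (∏ i, binomialWeight m p (j i)) *
        ((maxEntry j - m * p) / (√m * √(p * (1 - p)))) := by
  have := isProbabilityMeasure_binomialLaw (m := m) hp
  have hprob := isProbabilityMeasure_stdBinomialLaw (m := m) hp
  unfold stdBinomialLaw at hprob ⊢
  rw [← Measure.pi_map_pi fun _ => (measurable_standardize m p).aemeasurable,
    integral_map (measurable_of_finite _).aemeasurable
      (Measurable.iSup fun i => measurable_pi_apply i).aestronglyMeasurable,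
    integral_fintype Integrable.of_finite]
  refine sum_congr rfl fun j _ => ?_
  rw [ciSup_standardize hn, smul_eq_mul, Measure.real, Measure.pi_singleton,
    ENNReal.toReal_prod]
  simp_rw [binomialLaw_singleton, ENNReal.toReal_ofReal (binomialWeight_nonneg hp _)]

lemma sum_prod_binomialWeight (n m : ℕ) (p : ℝ) :
    ∑ j : Fin n → Fin (m + 1), ∏ i, binomialWeight m p (j i) = 1 := by
  rw [← Fintype.piFinset_univ, sum_prod_piFinset univ fun _ (k : Fin (m + 1)) =>
    binomialWeight m p k]
  simp [sum_binomialWeight]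

lemma integral_pow_mul_one_sub_pow_s1 (a b : ℕ) :
    ∫ p in (0 : ℝ)..1, p ^ a * (1 - p) ^ b =
      (a.factorial * b.factorial : ℝ) / (a + b + 1).factorial := by
  have h := beta_eq_betaIntegralReal (a + 1) (b + 1) (by positivity) (by positivity)
  have hc : Complex.betaIntegral ((a + 1 : ℝ) : ℂ) ((b + 1 : ℝ) : ℂ) =
      ((∫ p in (0 : ℝ)..1, p ^ a * (1 - p) ^ b : ℝ) : ℂ) := by
    rw [Complex.betaIntegral, ← intervalIntegral.integral_ofReal]
    refine intervalIntegral.integral_congr fun p _ => ?_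
    push_cast
    simp [← Complex.cpow_natCast]
  rw [hc, Complex.ofReal_re] at h
  rw [← h, beta, Real.Gamma_nat_eq_factorial, Real.Gamma_nat_eq_factorial,
    show (a + 1 + (b + 1) : ℝ) = ((a + b + 1 : ℕ) : ℝ) + 1 by push_cast; ring,
    Real.Gamma_nat_eq_factorial]

lemma integral_pow_pred_mul_one_sub_pow {N t : ℕ} (ht : 1 ≤ t) (htN : t ≤ N) :
    ∫ p in (0 : ℝ)..1, p ^ (t - 1) * (1 - p) ^ (N - t) = 1 / (N.choose t * t) := by
  obtain ⟨s, rfl⟩ : ∃ s, t = s + 1 := ⟨t - 1, by omega⟩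
  obtain ⟨r, rfl⟩ := Nat.exists_eq_add_of_le htN
  have hchoose := Nat.choose_mul_factorial_mul_factorial htN
  rw [Nat.add_sub_cancel_left] at hchoose
  have hchoose' : (((s + 1 + r).choose (s + 1) * (s + 1).factorial * r.factorial : ℕ) : ℝ) =
      (s + 1 + r).factorial := by rw [hchoose]
  rw [Nat.factorial_succ] at hchoose'
  push_cast at hchoose'
  rw [Nat.add_sub_cancel_left, Nat.add_sub_cancel, integral_pow_mul_one_sub_pow_s1,
    show s + r + 1 = s + 1 + r by ring, ← hchoose']
  have h1 : (s.factorial : ℝ) ≠ 0 := by positivity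
  have h2 : (r.factorial : ℝ) ≠ 0 := by positivity
  have h3 : ((s + 1 + r).choose (s + 1) : ℝ) ≠ 0 := by
    exact_mod_cast (Nat.choose_pos (by omega)).ne'
  push_cast
  field_simp

/-- The polynomial in `p` which, on `(0, 1)`, is `p⁻¹` times the expected maximum of `n` independent
binomial random variables with parameters `m` and `p`. -/
noncomputable def maxPoly (n m : ℕ) (p : ℝ) : ℝ :=
  ∑ j : Fin n → Fin (m + 1), ((∏ i, (m.choose (j i : ℕ) : ℝ)) * maxEntry j) *
    (p ^ (∑ i, (j i : ℕ) - 1) * (1 - p) ^ (n * m - ∑ i, (j i : ℕ)))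

lemma continuous_maxPoly (n m : ℕ) : Continuous (maxPoly n m) := by
  unfold maxPoly
  fun_prop

lemma sum_le_mul {n m : ℕ} (j : Fin n → Fin (m + 1)) : ∑ i, (j i : ℕ) ≤ n * m := by
  calc ∑ i, (j i : ℕ) ≤ ∑ _i : Fin n, m := sum_le_sum fun i _ => Nat.lt_succ_iff.1 (j i).2
    _ = n * m := by simp

lemma maxEntry_eq_zero {n m : ℕ} {j : Fin n → Fin (m + 1)} (h : ∑ i, (j i : ℕ) = 0) :
    maxEntry j = 0 := by
  rw [sum_eq_zero_iff] at h
  simpa [maxEntry] using h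

/-- Integrating over a uniform time turns the hypergeometric expectations into binomial ones. -/
lemma S_eq_integral_maxPoly (n m : ℕ) : S n m = ∫ p in (0 : ℝ)..1, maxPoly n m p := by
  unfold maxPoly
  rw [intervalIntegral.integral_finsetSum fun j _ =>
    Continuous.intervalIntegrable (by fun_prop) _ _]
  have hS : S n m = ∑ t ∈ Finset.Icc 1 (n * m), ∑ j : Fin n → Fin (m + 1) with
      ∑ i, (j i : ℕ) = t, ((∏ i, (m.choose (j i : ℕ) : ℝ)) * maxEntry j) *
        ∫ p in (0 : ℝ)..1, p ^ (∑ i, (j i : ℕ) - 1) * (1 - p) ^ (n * m - ∑ i, (j i : ℕ)) := by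
    refine sum_congr rfl fun t ht => ?_
    rw [expMaxHyper, sum_div]
    refine sum_congr rfl fun j hj => ?_
    rw [(mem_filter.1 hj).2, integral_pow_pred_mul_one_sub_pow (mem_Icc.1 ht).1 (mem_Icc.1 ht).2]
    rw [div_mul_eq_mul_div, div_div, mul_one_div]
  rw [hS, sum_fiberwise_eq_sum_filter, sum_filter]
  refine sum_congr rfl fun j _ => ?_
  rw [intervalIntegral.integral_const_mul]
  split_ifs with h
  · rfl
  · have h0 : ∑ i, (j i : ℕ) = 0 := by
      by_contra h0
      exact h (mem_Icc.2 ⟨Nat.one_le_iff_ne_zero.2 h0, sum_le_mul j⟩)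
    simp [maxEntry_eq_zero h0]

lemma maxPoly_mul_self (n m : ℕ) (p : ℝ) :
    maxPoly n m p * p =
      ∑ j : Fin n → Fin (m + 1), (∏ i, binomialWeight m p (j i)) * maxEntry j := by
  rw [maxPoly, sum_mul]
  refine sum_congr rfl fun j _ => ?_
  rcases Nat.eq_zero_or_pos (∑ i, (j i : ℕ)) with h0 | h0
  · simp [maxEntry_eq_zero h0]
  · have hsub : ∑ i, (m - (j i : ℕ)) = n * m - ∑ i, (j i : ℕ) := by
      rw [sum_tsub_distrib _ fun i _ => Nat.lt_succ_iff.1 (j i).2]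
      simp
    have hprod : ∏ i, binomialWeight m p (j i) = (∏ i, (m.choose (j i : ℕ) : ℝ)) *
        p ^ (∑ i, (j i : ℕ)) * (1 - p) ^ (n * m - ∑ i, (j i : ℕ)) := by
      simp only [binomialWeight, prod_mul_distrib, prod_pow_eq_pow_sum, hsub]
    rw [hprod, ← pow_sub_one_mul h0.ne' p]
    ring

lemma maxPoly_sub_div_sqrt {n : ℕ} (hn : 1 ≤ n) {m : ℕ} (hm : m ≠ 0) {p : ℝ}
    (hp : p ∈ Set.Ioo (0 : ℝ) 1) :
    (maxPoly n m p - m) / √m = √(p * (1 - p)) / p *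
      ∫ x : Fin n → ℝ, (⨆ i, x i) ∂(Measure.pi fun _ : Fin n => stdBinomialLaw m p) := by
  have hq : 0 < √(p * (1 - p)) := Real.sqrt_pos.2 (mul_pos hp.1 (by linarith [hp.2]))
  have hm' : 0 < √(m : ℝ) := Real.sqrt_pos.2 (by positivity)
  have hp0 := hp.1
  rw [integral_ciSup_stdBinomialLaw hn hp]
  simp only [mul_div_assoc', ← sum_div, mul_sub, sum_sub_distrib, ← sum_mul,
    sum_prod_binomialWeight, ← maxPoly_mul_self]
  field_simp

lemma hasDerivAt_arcsin_sqrt_add {p : ℝ} (hp : p ∈ Set.Ioo (0 : ℝ) 1) :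
    HasDerivAt (fun p => Real.arcsin √p + √(p * (1 - p))) (√(p * (1 - p)) / p) p := by
  have hp0 := hp.1
  have hq0 : 0 < 1 - p := by linarith [hp.2]
  have hs : √p < 1 := by
    rw [Real.sqrt_lt' one_pos]
    linarith [hp.2]
  have h1 : HasDerivAt (fun p : ℝ => p * (1 - p)) (1 * (1 - p) + p * (0 - 1)) p :=
    (hasDerivAt_id p).mul ((hasDerivAt_const p 1).sub (hasDerivAt_id p))
  have h2 := (Real.hasDerivAt_arcsin (x := √p) (by linarith [Real.sqrt_nonneg p]) hs.ne).comp p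
    (Real.hasDerivAt_sqrt hp0.ne')
  refine (h2.add (h1.sqrt (mul_pos hp0 hq0).ne')).congr_deriv ?_
  rw [Real.sq_sqrt hp0.le, Real.sqrt_mul hp0.le]
  have ha := Real.sqrt_pos.2 hp0
  have hb := Real.sqrt_pos.2 hq0
  have ha2 := Real.sq_sqrt hp0.le
  have hb2 := Real.sq_sqrt hq0.le
  field_simp
  rw [ha2, hb2]
  ring

lemma continuous_arcsin_sqrt_add : Continuous (fun p => Real.arcsin √p + √(p * (1 - p))) := by
  fun_prop

lemma intervalIntegrable_sqrt_div :
    IntervalIntegrable (fun p : ℝ => √(p * (1 - p)) / p) volume 0 1 := by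
  rw [intervalIntegrable_iff_integrableOn_Ioc_of_le zero_le_one]
  exact intervalIntegral.integrableOn_deriv_of_nonneg continuous_arcsin_sqrt_add.continuousOn
    (fun p hp => hasDerivAt_arcsin_sqrt_add hp)
    fun p hp => div_nonneg (Real.sqrt_nonneg _) hp.1.le

lemma integral_sqrt_div : ∫ p in (0 : ℝ)..1, √(p * (1 - p)) / p = Real.pi / 2 := by
  rw [intervalIntegral.integral_eq_sub_of_hasDerivAt_of_le zero_le_one
    continuous_arcsin_sqrt_add.continuousOn (fun p hp => hasDerivAt_arcsin_sqrt_add hp)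
    intervalIntegrable_sqrt_div]
  simp

theorem stmt1 (n : ℕ) (hn : 1 ≤ n) :
    Filter.Tendsto (fun m : ℕ => (S n m - m) / Real.sqrt m) Filter.atTop
      (nhds (Real.pi / 2 * gaussMaxExp n)) := by
  have hS (m : ℕ) : (S n m - m) / √m = ∫ p in (0 : ℝ)..1, (maxPoly n m p - m) / √m := by
    rw [intervalIntegral.integral_div, intervalIntegral.integral_sub
      ((continuous_maxPoly n m).intervalIntegrable _ _) (by simp), ← S_eq_integral_maxPoly]
    simp
  simp_rw [hS]
  rw [← integral_sqrt_div, ← intervalIntegral.integral_mul_const]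
  have hne : ∀ᵐ p : ℝ, p ≠ 1 := by simp [ae_iff]
  have hmem {p : ℝ} (h1 : p ≠ 1) (hp : p ∈ Set.uIoc (0 : ℝ) 1) : p ∈ Set.Ioo (0 : ℝ) 1 := by
    rw [Set.uIoc_of_le zero_le_one] at hp
    exact ⟨hp.1, lt_of_le_of_ne hp.2 h1⟩
  refine intervalIntegral.tendsto_integral_filter_of_dominated_convergence
    (fun p => √(p * (1 - p)) / p * n) ?_ ?_ (intervalIntegrable_sqrt_div.mul_const _) ?_
  · exact Filter.Eventually.of_forall fun m =>
      (((continuous_maxPoly n m).sub continuous_const).div_const _).aestronglyMeasurable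
  · filter_upwards [Filter.eventually_ne_atTop 0] with m hm
    filter_upwards [hne] with p h1 hp
    have hp' := hmem h1 hp
    have := isProbabilityMeasure_stdBinomialLaw (m := m) hp'
    have h0 : 0 ≤ √(p * (1 - p)) / p := div_nonneg (Real.sqrt_nonneg _) hp'.1.le
    rw [maxPoly_sub_div_sqrt hn hm hp', norm_mul, Real.norm_of_nonneg h0, Real.norm_eq_abs]
    exact mul_le_mul_of_nonneg_left (abs_integral_ciSup_pi_le hn
      (integrable_sq_stdBinomialLaw hp') (integral_sq_stdBinomialLaw_le hp')) h0
  · filter_upwards [hne] with p h1 hp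
    have hp' := hmem h1 hp
    refine ((tendsto_integral_ciSup_stdBinomialLaw hn hp').const_mul _).congr' ?_
    filter_upwards [Filter.eventually_ne_atTop 0] with m hm
    rw [maxPoly_sub_div_sqrt hn hm hp']
end
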